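/- arXiv:1211.4301 — 2 statements merged into one kernel-verified Lean document; each statement's English description precedes it below -/
import Mathlib

section
/- Let I ⊆ R be a square-free monomial ideal with labeled hypergraph H = H(I) = (V, X, E, 𝓔) of dimension 1 (every edge has at most 2 vertices). Suppose there exist closed vertices c_1,...,c_t such that: (1) c_i ∉ N_H(c_j) for all i, j; (2) every open vertex has some c_i as a neighbor; (3) for each i there is a unique variable a_i ∈ X with E_{a_i} = {c_i}. Then reg(R/I) ≥ |X| − |V|. -/
/-!
Why the bound holds. Put `H = G ∖ C` and let `U` be the set of variables occurring in `H`; `H` consists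
of the generators not divisible by any of the labels `a_c` of the singleton edges of the `c ∈ C`.

* Each `v ∈ H` contains a variable lying in no other member of `H`: if `v` is closed this is the label
  of its singleton edge, and otherwise it is a label shared with a neighbor `c ∈ C`, as edges have at
  most two vertices. Moreover no `c ∈ C` is supported in `U`, since `c` contains `a_c ∉ U`.
* Let `P ⊆ U` consist of one such private variable for each `v ∈ H`. Then `x^(U ∖ P) e_P` is a Koszul
  cycle modulo `I` of homological degree `|H|` and internal degree `|U|`. It is not a boundary:
  assign to each variable of `U` a generator in `H` containing it, and consider the `0/1` matrix of
  this assignment. Its columns sum to `1`, so its maximal minors, paired with the coefficients of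
  `x^(U ∖ S) e_S`, give a functional vanishing on boundaries (`sum_minor`) and on chains with
  coefficients in `I`, but not on this cycle (`bettiNe_of_private`).
* A variable of `X` outside `U` lies in a unique member of `C` and determines it, so `|X| ≤ |U| + |C|`, while
  `|V| = |H| + |C|`. Hence `|X| - |V| ≤ |U| - |H|`.

As `reg` is a supremum in `ℤ`, the set of shifts `j - i` must also be shown to be bounded above
(`le_of_bettiNe`). For each variable `a`, a homotopy that divides by `a` shows that every cycle is
homologous to its part in multidegrees with component at most `1` at `a` (`exists_reduce`); doing
this for all variables leaves nothing once the polynomial degree exceeds the number of variables.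
-/

/-!
Common setup: square-free monomial ideals in `R = K[A]` (here `MvPolynomial σ K`
with `σ` the finite alphabet `A`), encoded by the finite antichain `G` of
supports of their minimal monomial generators; the labeled hypergraph `H(I)`
of such an ideal, whose vertex set is (in bijection with) `G` and whose edge
labeled by a variable `a` is `E_a = { S ∈ G : a ∈ S }`; and Castelnuovo–Mumford
regularity and projective dimension of `R/I`, defined via graded Betti numbers
`β_{ij}(R/I) = dim_K Tor_i^R(R/I, K)_j`, which are computed from the Koszul
complex of the variables tensored with `R/I`.
-/

open MvPolynomial Finset
open scoped Classical

namespace SqfreeHyp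

variable (σ : Type) [Fintype σ] [LinearOrder σ] (K : Type) [Field K]

/-- The square-free monomial `∏_{a ∈ S} a`. -/
noncomputable def sqMon (S : Finset σ) : MvPolynomial σ K := ∏ a ∈ S, X a

/-- The square-free monomial ideal whose (minimal) monomial generators have
supports exactly the members of `G`. -/
noncomputable def monIdeal (G : Finset (Finset σ)) : Ideal (MvPolynomial σ K) :=
  Ideal.span ((fun S => sqMon σ K S) '' (G : Set (Finset σ)))

/-- `G` is an antichain under inclusion (= divisibility of the square-free
monomials): the corresponding monomial generating set is minimal. -/
def MinGens (G : Finset (Finset σ)) : Prop := ∀ S ∈ G, ∀ T ∈ G, S ⊆ T → S = T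

/-- `E_a`: the edge of the labeled hypergraph `H(I)` labeled by the variable `a`,
consisting of the (vertices corresponding to the) generators divisible by `a`. -/
def EdgeOf (G : Finset (Finset σ)) (a : σ) : Finset (Finset σ) :=
  G.filter (fun S => a ∈ S)

/-- The set `𝓔` of (nonempty) edges of the labeled hypergraph. -/
noncomputable def edgeSet (G : Finset (Finset σ)) : Finset (Finset (Finset σ)) :=
  (Finset.univ.image (EdgeOf σ G)).filter (· ≠ ∅)

/-- `X`: the set of variables appearing among the generators (the labels). -/
def varsOf (G : Finset (Finset σ)) : Finset σ := G.biUnion id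

/-- A vertex is closed if its singleton is an edge. -/
def Closed (G : Finset (Finset σ)) (v : Finset σ) : Prop :=
  ∃ a : σ, EdgeOf σ G a = {v}

/-- The neighbors `N_H(v)` of a vertex: the other vertices sharing an edge with `v`. -/
noncomputable def Neighbors (G : Finset (Finset σ)) (v : Finset σ) : Finset (Finset σ) :=
  G.filter (fun w => w ≠ v ∧ ∃ a : σ, v ∈ EdgeOf σ G a ∧ w ∈ EdgeOf σ G a)

/-- The open (= not closed) vertices. -/
noncomputable def openVerts (G : Finset (Finset σ)) : Finset (Finset σ) :=
  G.filter (fun v => ¬ Closed σ G v)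

/-- The minimal members of a family of supports (used to pass to the minimal
monomial generating sets of colon ideals and sums). -/
def minimalize (A : Finset (Finset σ)) : Finset (Finset σ) :=
  A.filter (fun S => ∀ T ∈ A, T ⊆ S → T = S)

/-- An edge is simple if it has at least two vertices and has no proper
subedge besides `∅`. -/
def SimpleEdge (G : Finset (Finset σ)) (F : Finset (Finset σ)) : Prop :=
  F ∈ edgeSet σ G ∧ 2 ≤ F.card ∧ ∀ F' ∈ edgeSet σ G, F' ⊆ F → F' = F

/-- The set of simple edges. -/
noncomputable def simpleEdges (G : Finset (Finset σ)) : Finset (Finset (Finset σ)) :=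
  (edgeSet σ G).filter (fun F => SimpleEdge σ G F)

/-- `H(I)` has isolated simple edges: every open vertex is contained in
exactly one simple edge. -/
def HasIsolatedSimpleEdges (G : Finset (Finset σ)) : Prop :=
  ∀ v ∈ G, ¬ Closed σ G v → ∃! F : Finset (Finset σ), SimpleEdge σ G F ∧ v ∈ F

/-! ### Regularity via graded Betti numbers.
`β_{ij}(R/I) = dim_K Tor_i^R(R/I,K)_j` where `Tor` is computed by the Koszul
complex on the variables of `R` tensored with `R/I`; its `i`-th term has basis
indexed by `i`-element subsets of the variables, with coefficients in `R/I`. -/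

/-- Index of the degree-`i` term of the Koszul complex. -/
abbrev KT (i : ℕ) : Type _ := {T : Finset σ // T.card = i}

/-- The Koszul differential on `K_•(x_a : a) ⊗ R/I`. -/
noncomputable def kd (I : Ideal (MvPolynomial σ K)) (i : ℕ)
    (c : KT σ i →₀ (MvPolynomial σ K ⧸ I)) :
    KT σ (i - 1) →₀ (MvPolynomial σ K ⧸ I) :=
  c.sum fun T m => ∑ a ∈ T.1.attach,
    ((-1 : ℤ) ^ ((T.1.filter (fun b => b < a.1)).card)) •
      Finsupp.single
        (⟨T.1.erase a.1, by rw [Finset.card_erase_of_mem a.2, T.2]⟩ : KT σ (i - 1))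
        ((X a.1 : MvPolynomial σ K) • m)

/-- `c` is homogeneous of internal degree `j` (each coefficient at a size-`i`
subset is the class of a homogeneous polynomial of degree `j - i`). -/
def IsHomogEl (I : Ideal (MvPolynomial σ K)) (i j : ℕ)
    (c : KT σ i →₀ (MvPolynomial σ K ⧸ I)) : Prop :=
  ∀ T : KT σ i, ∃ p : MvPolynomial σ K,
    p.IsHomogeneous (j - i) ∧ Ideal.Quotient.mk I p = c T

/-- The graded Betti number `β_{ij}(R/I)` is nonzero: there is a homogeneous
cycle of internal degree `j` in homological degree `i` of the Koszul complex
tensored with `R/I` which is not a boundary. -/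
def BettiNe (I : Ideal (MvPolynomial σ K)) (i j : ℕ) : Prop :=
  ∃ c : KT σ i →₀ (MvPolynomial σ K ⧸ I),
    IsHomogEl σ K I i j c ∧ kd σ K I i c = 0 ∧
    ∀ b : KT σ (i + 1) →₀ (MvPolynomial σ K ⧸ I), kd σ K I (i + 1) b ≠ c

/-- Castelnuovo–Mumford regularity of `R/I`: `max { j - i : β_{ij}(R/I) ≠ 0 }`. -/
noncomputable def reg (I : Ideal (MvPolynomial σ K)) : ℤ :=
  sSup { d : ℤ | ∃ i j : ℕ, BettiNe σ K I i j ∧ d = (j : ℤ) - (i : ℤ) }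

/-- Projective dimension of `R/I`: `max { i : β_{ij}(R/I) ≠ 0 for some j }`. -/
noncomputable def pdim (I : Ideal (MvPolynomial σ K)) : ℕ :=
  sSup { i : ℕ | ∃ j : ℕ, BettiNe σ K I i j }

end SqfreeHyp

open SqfreeHyp

namespace SqfreeReg

set_option linter.unusedSectionVars false

variable {σ : Type} [Fintype σ] [LinearOrder σ] {K : Type} [Field K]

/-! ### Monomial ideals and the Koszul differential -/

/-- The exponent vector of the square-free monomial with support `S`. -/
noncomputable def ind (S : Finset σ) : σ →₀ ℕ :=
  Finsupp.equivFunOnFinite.symm (fun a => if a ∈ S then 1 else 0)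

lemma ind_apply (S : Finset σ) (a : σ) : ind S a = if a ∈ S then 1 else 0 := rfl

lemma sqMon_eq (S : Finset σ) : sqMon σ K S = monomial (ind S) 1 := by
  rw [monomial_eq, Finsupp.prod_fintype _ _ (by simp), sqMon]
  simp [ind_apply, Finset.prod_ite_mem, pow_ite]

/-- A polynomial lies in the monomial ideal iff each of its monomials is divisible by a
generator. -/
lemma mem_monIdeal (G : Finset (Finset σ)) (f : MvPolynomial σ K) :
    f ∈ monIdeal σ K G ↔ ∀ μ, coeff μ f ≠ 0 → ∃ g ∈ G, ∀ a ∈ g, 1 ≤ μ a := by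
  have : monIdeal σ K G =
      Ideal.span ((fun s => monomial s (1 : K)) '' (ind '' (G : Set (Finset σ)))) := by
    rw [monIdeal, Set.image_image]
    congr 1
    exact Set.image_congr fun S _ => sqMon_eq S
  rw [this, mem_ideal_span_monomial_image]
  simp only [mem_support_iff, Set.mem_image, SetLike.mem_coe, exists_exists_and_eq_and]
  refine forall₂_congr fun μ _ => exists_congr fun g => and_congr_right fun _ => ?_
  constructor
  · intro h a ha
    simpa [ind_apply, ha] using h a
  · intro h a
    rw [ind_apply]
    split_ifs with ha
    · exact h a ha
    · exact Nat.zero_le _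

/-- The Koszul sign of `a` relative to `S`. -/
def sg (a : σ) (S : Finset σ) : ℤ := (-1) ^ (S.filter (fun b => b < a)).card

lemma sg_mul_self (a : σ) (S : Finset σ) : sg a S * sg a S = 1 := by
  rw [sg, ← mul_pow]; simp

lemma sg_erase (a : σ) (T : Finset σ) : sg a (T.erase a) = sg a T := by
  unfold sg
  congr 2
  ext b
  simp only [mem_filter, mem_erase]
  grind

lemma sg_insert {a b : σ} {S : Finset σ} (hb : b ∉ S) :
    sg a (insert b S) = (if b < a then -1 else 1) * sg a S := by
  unfold sg
  rw [Finset.filter_insert]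
  split_ifs with h
  · rw [card_insert_of_notMem (by simp [hb]), pow_succ]; ring
  · simp

/-- The sign rule by which inserting `a` and removing `b`, for distinct variables, anticommute. -/
lemma sg_anticomm {a b : σ} {S : Finset σ} (ha : a ∉ S) (hb : b ∉ S) (hab : a ≠ b) :
    sg b (insert a S) * sg a (insert b S) = - (sg a S * sg b S) := by
  rw [sg_insert ha, sg_insert hb]
  rcases lt_or_gt_of_ne hab with h | h
  · simp [h, h.not_gt]; ring
  · simp [h, h.not_gt]; ring

/-- The Koszul differential on chains with polynomial coefficients. A chain is a function on all
finite sets of variables, so that every homological degree is treated at once. -/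
noncomputable def D (F : Finset σ → MvPolynomial σ K) (S : Finset σ) : MvPolynomial σ K :=
  ∑ a ∈ Sᶜ, sg a S • (X a * F (insert a S))

/-- The differential `kd` is induced by `D`: if `F` lifts `c` and is concentrated in degree `i`,
then `D F` lifts `kd c`. -/
lemma kd_apply (I : Ideal (MvPolynomial σ K)) (i : ℕ) (c : KT σ i →₀ (MvPolynomial σ K ⧸ I))
    (F : Finset σ → MvPolynomial σ K)
    (hF : ∀ T : KT σ i, Ideal.Quotient.mk I (F T.1) = c T)
    (hF0 : ∀ T : Finset σ, T.card ≠ i → F T = 0) (S : KT σ (i - 1)) :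
    kd σ K I i c S = Ideal.Quotient.mk I (D F S.1) := by
  have key : ∀ T : KT σ i, (∑ a ∈ T.1.attach,
      ((-1 : ℤ) ^ ((T.1.filter (fun b => b < a.1)).card)) •
      Finsupp.single
        (⟨T.1.erase a.1, by rw [Finset.card_erase_of_mem a.2, T.2]⟩ : KT σ (i - 1))
        ((X a.1 : MvPolynomial σ K) • c T)) S =
      ∑ a : σ, if a ∉ S.1 ∧ T.1 = insert a S.1 then
        Ideal.Quotient.mk I (sg a S.1 • (X a * F T.1)) else 0 := by
    intro T
    rw [Finsupp.finsetSum_apply]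
    have : ∀ a : σ, (if a ∉ S.1 ∧ T.1 = insert a S.1 then
        Ideal.Quotient.mk I (sg a S.1 • (X a * F T.1)) else 0) =
        if a ∈ T.1 then (if T.1.erase a = S.1 then
          Ideal.Quotient.mk I (sg a S.1 • (X a * F T.1)) else 0) else 0 := by
      intro a
      rw [← ite_and]
      refine if_congr ?_ rfl rfl
      constructor
      · rintro ⟨h1, h2⟩
        rw [h2]; simp [h1]
      · rintro ⟨h1, h2⟩
        rw [← h2]; simp [h1]
    refine Eq.trans ?_ (Finset.sum_congr rfl fun a _ => (this a).symm)
    rw [Finset.sum_ite_mem, Finset.univ_inter]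
    refine Eq.trans ?_ (Finset.sum_attach T.1 _)
    refine Finset.sum_congr rfl fun a _ => ?_
    rw [Finsupp.smul_apply, Finsupp.single_apply]
    by_cases h : T.1.erase a.1 = S.1
    · have h' : (⟨T.1.erase a.1, by rw [Finset.card_erase_of_mem a.2, T.2]⟩ : KT σ (i - 1)) = S :=
        Subtype.ext h
      rw [if_pos h', if_pos h, ← h, sg_erase, map_zsmul, map_mul, hF]
      rfl
    · rw [if_neg (fun h' => h (congrArg Subtype.val h')), if_neg h, smul_zero]
  rw [kd, Finsupp.sum_fintype _ _ (by simp), Finsupp.finsetSum_apply,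
    Finset.sum_congr rfl fun T _ => key T, Finset.sum_comm, D, map_sum,
    ← Finset.sum_subset (Finset.subset_univ (S.1ᶜ))]
  · refine Finset.sum_congr rfl fun a ha => ?_
    have ha' : a ∉ S.1 := by simpa using ha
    by_cases hc : (insert a S.1).card = i
    · rw [Finset.sum_eq_single (⟨insert a S.1, hc⟩ : KT σ i)]
      · simp [ha']
      · intro T _ hT
        rw [if_neg]
        rintro ⟨-, h⟩
        exact hT (Subtype.ext h)
      · simp
    · rw [hF0 _ hc]
      simp only [mul_zero, smul_zero, map_zero]
      refine Finset.sum_eq_zero fun T _ => ?_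
      rw [if_neg]
      rintro ⟨-, h⟩
      exact hc (h ▸ T.2)
  · intro a _ ha
    refine Finset.sum_eq_zero fun T _ => ?_
    rw [if_neg]
    rintro ⟨h, -⟩
    exact ha (by simpa using h)

/-! ### Vanishing of Betti numbers in large degree -/

/-- The `K`-linear projection of `K[σ]` onto the span of the monomials whose exponent at `a` is
at least `k`. -/
noncomputable def keep (k : ℕ) (a : σ) : MvPolynomial σ K →ₗ[K] MvPolynomial σ K :=
  (basisMonomials σ K).constr K fun μ => if k ≤ μ a then monomial μ 1 else 0

/-- The `K`-linear map dividing a monomial by `a` if its exponent at `a` is at least `2`, and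
killing it otherwise. -/
noncomputable def shift (a : σ) : MvPolynomial σ K →ₗ[K] MvPolynomial σ K :=
  (basisMonomials σ K).constr K fun μ =>
    if 2 ≤ μ a then monomial (μ - Finsupp.single a 1) 1 else 0

lemma keep_monomial (k : ℕ) (a : σ) (μ : σ →₀ ℕ) (r : K) :
    keep k a (monomial μ r) = if k ≤ μ a then monomial μ r else 0 := by
  have h := (basisMonomials σ K).constr_basis K
    (fun μ => if k ≤ μ a then monomial μ (1 : K) else 0) μ
  have hr : monomial μ r = r • basisMonomials σ K μ := by
    simp [coe_basisMonomials, smul_monomial]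
  rw [hr, map_smul, keep, h]
  split_ifs <;> simp [coe_basisMonomials]

lemma shift_monomial (a : σ) (μ : σ →₀ ℕ) (r : K) :
    shift a (monomial μ r) = if 2 ≤ μ a then monomial (μ - Finsupp.single a 1) r else 0 := by
  have h := (basisMonomials σ K).constr_basis K
    (fun μ => if 2 ≤ μ a then monomial (μ - Finsupp.single a 1) (1 : K) else 0) μ
  have hr : monomial μ r = r • basisMonomials σ K μ := by
    simp [coe_basisMonomials, smul_monomial]
  rw [hr, map_smul, shift, h]
  split_ifs <;> simp [smul_monomial]

lemma coeff_keep (k : ℕ) (a : σ) (f : MvPolynomial σ K) (ν : σ →₀ ℕ) :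
    coeff ν (keep k a f) = if k ≤ ν a then coeff ν f else 0 := by
  induction f using MvPolynomial.induction_on' with
  | monomial μ r =>
    rw [keep_monomial]
    by_cases h : μ = ν
    · subst h; split_ifs <;> simp
    · split_ifs <;> simp [coeff_monomial, h]
  | add p q hp hq =>
    rw [map_add, coeff_add, hp, hq, coeff_add]
    split_ifs <;> simp

lemma coeff_shift (a : σ) (f : MvPolynomial σ K) (ν : σ →₀ ℕ) :
    coeff ν (shift a f) = if 1 ≤ ν a then coeff (ν + Finsupp.single a 1) f else 0 := by
  induction f using MvPolynomial.induction_on' with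
  | monomial μ r =>
    rw [shift_monomial]
    by_cases h : μ = ν + Finsupp.single a 1
    · subst h
      simp only [Finsupp.add_apply, Finsupp.single_eq_same, add_tsub_cancel_right]
      split_ifs <;> first | omega | simp
    · have : 2 ≤ μ a → μ - Finsupp.single a 1 ≠ ν := by
        rintro h2 rfl
        exact h (tsub_add_cancel_of_le (by simpa using (by omega : 1 ≤ μ a))).symm
      split_ifs <;> simp_all [coeff_monomial]
  | add p q hp hq =>
    rw [map_add, coeff_add, hp, hq, coeff_add]
    split_ifs <;> simp

lemma X_mul_shift (a : σ) (f : MvPolynomial σ K) : X a * shift a f = keep 2 a f := by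
  ext ν
  rw [coeff_X_mul', coeff_keep, coeff_shift]
  have : 1 ≤ ν a → ν - Finsupp.single a 1 + Finsupp.single a 1 = ν := fun h =>
    tsub_add_cancel_of_le (by simpa using h)
  simp only [Finsupp.mem_support_iff, Finsupp.tsub_apply, Finsupp.single_eq_same]
  grind

lemma shift_X_mul_self (a : σ) (f : MvPolynomial σ K) : shift a (X a * f) = keep 1 a f := by
  ext ν
  rw [coeff_shift, coeff_keep, coeff_X_mul']
  simp

lemma shift_X_mul {a b : σ} (h : a ≠ b) (f : MvPolynomial σ K) :
    shift a (X b * f) = X b * shift a f := by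
  ext ν
  rw [coeff_shift, coeff_X_mul', coeff_X_mul', coeff_shift]
  have : ν b ≠ 0 → ν + Finsupp.single a 1 - Finsupp.single b 1
      = ν - Finsupp.single b 1 + Finsupp.single a 1 := fun hb =>
    tsub_add_eq_add_tsub (by simpa [Nat.one_le_iff_ne_zero] using hb) |>.symm
  simp only [Finsupp.mem_support_iff, Finsupp.tsub_apply, Finsupp.add_apply,
    Finsupp.single_eq_of_ne h, Finsupp.single_eq_of_ne h.symm]
  grind

lemma keep_X_mul_self (k : ℕ) (a : σ) (f : MvPolynomial σ K) :
    keep (k + 1) a (X a * f) = X a * keep k a f := by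
  ext ν
  rw [coeff_keep, coeff_X_mul', coeff_X_mul', coeff_keep]
  simp only [Finsupp.mem_support_iff, Finsupp.tsub_apply, Finsupp.single_eq_same]
  grind

lemma keep_X_mul (k : ℕ) {a b : σ} (h : a ≠ b) (f : MvPolynomial σ K) :
    keep k a (X b * f) = X b * keep k a f := by
  ext ν
  rw [coeff_keep, coeff_X_mul', coeff_X_mul', coeff_keep]
  simp only [Finsupp.mem_support_iff, Finsupp.tsub_apply, Finsupp.single_eq_of_ne h]
  grind

lemma keep_mem {G : Finset (Finset σ)} (k : ℕ) (a : σ) {f : MvPolynomial σ K}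
    (hf : f ∈ monIdeal σ K G) : keep k a f ∈ monIdeal σ K G := by
  rw [mem_monIdeal] at hf ⊢
  intro μ hμ
  rw [coeff_keep] at hμ
  exact hf μ (by grind)

/-- Since the generators are square-free, dividing by `a` a monomial of exponent at least `2`
does not leave the ideal. -/
lemma shift_mem {G : Finset (Finset σ)} (a : σ) {f : MvPolynomial σ K}
    (hf : f ∈ monIdeal σ K G) : shift a f ∈ monIdeal σ K G := by
  rw [mem_monIdeal] at hf ⊢
  intro μ hμ
  rw [coeff_shift] at hμ
  have h1 : 1 ≤ μ a := by grind
  obtain ⟨g, hg, h⟩ := hf (μ + Finsupp.single a 1) (by grind)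
  refine ⟨g, hg, fun b hb => ?_⟩
  by_cases hab : b = a
  · rw [hab]; exact h1
  · simpa [Finsupp.single_eq_of_ne hab] using h b hb

/-- The contracting homotopy in the direction of the variable `a`. -/
noncomputable def htpy (a : σ) (F : Finset σ → MvPolynomial σ K) (T : Finset σ) :
    MvPolynomial σ K :=
  if a ∈ T then sg a (T.erase a) • shift a (F (T.erase a)) else 0

/-- The projection of chains onto the multidegrees whose component at `a` is at least `2`; the
basis element indexed by `T` contributes `1` to that component if `a ∈ T`. -/
noncomputable def proj (a : σ) (F : Finset σ → MvPolynomial σ K) (T : Finset σ) :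
    MvPolynomial σ K :=
  keep (if a ∈ T then 1 else 2) a (F T)

/-- `htpy a` is a homotopy between `0` and `proj a`. -/
lemma htpy_eq (a : σ) (F : Finset σ → MvPolynomial σ K) (S : Finset σ) :
    D (htpy a F) S + htpy a (D F) S = proj a F S := by
  by_cases ha : a ∈ S
  · obtain ⟨S, ha', rfl⟩ : ∃ S', a ∉ S' ∧ S = insert a S' :=
      ⟨S.erase a, by simp, (insert_erase ha).symm⟩
    have hc : Sᶜ = insert a (insert a S)ᶜ := by
      ext b; simp only [mem_compl, mem_insert]; grind
    rw [htpy, if_pos ha, erase_insert ha', D, D, hc, sum_insert (by simp), proj, if_pos ha,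
      map_add, map_zsmul, shift_X_mul_self, smul_add, smul_smul, sg_mul_self, one_smul,
      map_sum, smul_sum, add_left_comm, ← sum_add_distrib, sum_eq_zero, add_zero]
    intro b hb
    simp only [mem_compl, mem_insert, not_or] at hb
    obtain ⟨hba, hbS⟩ := hb
    have he : (insert b (insert a S)).erase a = insert b S := by
      ext c; simp only [mem_erase, mem_insert]; grind
    rw [htpy, if_pos (by simp), he, map_zsmul, shift_X_mul (Ne.symm hba), mul_smul_comm,
      smul_smul, smul_smul, ← add_smul, sg_anticomm ha' hbS (Ne.symm hba)]
    simp
  · rw [htpy, if_neg ha, add_zero, proj, if_neg ha, D, sum_eq_single a]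
    · rw [htpy, if_pos (by simp), erase_insert ha, mul_smul_comm, smul_smul, sg_mul_self,
        one_smul, X_mul_shift]
    · intro b _ hb
      rw [htpy, if_neg (by simp [ha, Ne.symm hb]), mul_zero, smul_zero]
    · simp [ha]

lemma D_proj (a : σ) (F : Finset σ → MvPolynomial σ K) (S : Finset σ) :
    D (proj a F) S = proj a (D F) S := by
  rw [proj, D, D, map_sum]
  refine sum_congr rfl fun b hb => ?_
  rw [map_zsmul, proj]
  congr 1
  by_cases hab : a = b
  · subst hab
    have hb' : a ∉ S := by simpa using hb
    rw [if_pos (by simp), if_neg hb', keep_X_mul_self]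
  · rw [keep_X_mul _ hab]
    simp [hab]

lemma D_sub (F F' : Finset σ → MvPolynomial σ K) (S : Finset σ) :
    D (F - F') S = D F S - D F' S := by
  simp only [D, Pi.sub_apply, mul_sub, smul_sub, sum_sub_distrib]

lemma D_add (F F' : Finset σ → MvPolynomial σ K) (S : Finset σ) :
    D (F + F') S = D F S + D F' S := by
  simp only [D, Pi.add_apply, mul_add, smul_add, sum_add_distrib]

/-- Every cycle `F` modulo the ideal is homologous to a cycle `F'`, formed from monomials of `F`, in
multidegrees whose components along `A` are at most `1`. -/
lemma exists_reduce (G : Finset (Finset σ)) (i : ℕ) (F : Finset σ → MvPolynomial σ K)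
    (hF : ∀ T, T.card ≠ i → F T = 0) (hc : ∀ S, D F S ∈ monIdeal σ K G) (A : Finset σ) :
    ∃ B F' : Finset σ → MvPolynomial σ K, (∀ T, T.card ≠ i + 1 → B T = 0) ∧
      (∀ S, D F' S ∈ monIdeal σ K G) ∧
      (∀ S, F S - D B S - F' S ∈ monIdeal σ K G) ∧
      (∀ T μ, coeff μ (F' T) ≠ 0 → coeff μ (F T) ≠ 0 ∧
        ∀ a ∈ A, μ a + (if a ∈ T then 1 else 0) ≤ 1) := by
  induction A using Finset.induction_on with
  | empty => exact ⟨0, F, by simp, hc, by simp [D], by simp⟩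
  | insert a A _ ih =>
    obtain ⟨B, F', hB, hc', hFB, hsup⟩ := ih
    have hF' : ∀ T, T.card ≠ i → F' T = 0 := by
      intro T hT
      ext μ
      by_contra h
      exact (hsup T μ (by simpa using h)).1 (by simp [hF T hT])
    have hmem : ∀ S, htpy a (D F') S ∈ monIdeal σ K G := by
      intro S
      rw [htpy]
      split_ifs
      · exact zsmul_mem (shift_mem a (hc' _)) _
      · exact zero_mem _
    refine ⟨B + htpy a F', F' - proj a F', ?_, ?_, ?_, ?_⟩
    · intro T hT
      rw [Pi.add_apply, hB T hT, zero_add, htpy]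
      split_ifs with h
      · rw [hF', map_zero, smul_zero]
        rw [card_erase_of_mem h]
        have := card_pos.mpr ⟨a, h⟩
        omega
      · rfl
    · intro S
      rw [D_sub, D_proj]
      exact sub_mem (hc' S) (keep_mem _ _ (hc' S))
    · intro S
      have : F S - D (B + htpy a F') S - (F' - proj a F') S =
          (F S - D B S - F' S) + htpy a (D F') S := by
        rw [D_add, Pi.sub_apply, ← htpy_eq]; ring
      rw [this]
      exact add_mem (hFB S) (hmem S)
    · intro T μ hμ
      rw [Pi.sub_apply, coeff_sub, proj, coeff_keep] at hμ
      have h0 : coeff μ (F' T) ≠ 0 := by grind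
      refine ⟨(hsup T μ h0).1, ?_⟩
      rw [forall_mem_insert]
      exact ⟨by grind, (hsup T μ h0).2⟩

/-- If `β_{ij}(R/I) ≠ 0`, then `j - i` is at most the number of variables. In particular the
supremum defining the regularity is over a set bounded above. -/
lemma le_of_bettiNe (G : Finset (Finset σ)) (i j : ℕ) (h : BettiNe σ K (monIdeal σ K G) i j) :
    (j : ℤ) - i ≤ Fintype.card σ := by
  obtain ⟨c, hhom, hcyc, hnb⟩ := h
  by_contra! hlt
  choose p hp hpc using hhom
  let F : Finset σ → MvPolynomial σ K := fun T => if h : T.card = i then p ⟨T, h⟩ else 0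
  have hF0 : ∀ T, T.card ≠ i → F T = 0 := fun T hT => dif_neg hT
  have hFp : ∀ T : KT σ i, F T.1 = p T := fun T => dif_pos T.2
  have hc : ∀ S, D F S ∈ monIdeal σ K G := by
    intro S
    by_cases hS : S.card + 1 = i
    · have := kd_apply (monIdeal σ K G) i c F (fun T => by rw [hFp, hpc]) hF0
        ⟨S, by omega⟩
      rw [hcyc, Finsupp.zero_apply] at this
      exact Ideal.Quotient.eq_zero_iff_mem.mp this.symm
    · rw [D, sum_eq_zero]
      · exact zero_mem _
      · intro a ha
        rw [hF0, mul_zero, smul_zero]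
        rwa [card_insert_of_notMem (by simpa using ha)]
  obtain ⟨B, F', hB, -, hFB, hsup⟩ := exists_reduce G i F hF0 hc univ
  -- every monomial of `F` has degree `j - i`, which exceeds the number of variables
  have hF' : ∀ T, F' T = 0 := by
    intro T
    ext μ
    by_contra hne
    obtain ⟨h1, h2⟩ := hsup T μ (by simpa using hne)
    have hT : T.card = i := by
      by_contra hT
      exact h1 (by rw [hF0 T hT, coeff_zero])
    rw [hFp ⟨T, hT⟩] at h1
    have hdeg := hp ⟨T, hT⟩ h1
    have hle : μ.degree ≤ Fintype.card σ := by
      rw [Finsupp.degree_eq_sum, ← Finset.card_univ, Finset.card_eq_sum_ones]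
      exact Finset.sum_le_sum fun a _ => (Nat.le_add_right _ _).trans (h2 a (mem_univ a))
    replace hdeg : μ.degree = j - i := by
      rw [Finsupp.degree_eq_weight_one]; exact hdeg
    omega
  refine hnb (Finsupp.equivFunOnFinite.symm fun T => Ideal.Quotient.mk _ (B T.1)) ?_
  ext S : 1
  rw [kd_apply (monIdeal σ K G) (i + 1) _ B (fun T => rfl) hB S, ← hpc, ← hFp, eq_comm,
    Ideal.Quotient.eq]
  simpa [hF'] using hFB S.1

/-! ### A nonzero Betti number -/

/-- The determinant of the columns of `N` indexed by the elements of `S`, in increasing order;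
it is `0` by convention if `S` does not have `m` elements. -/
noncomputable def minor {m : ℕ} (N : Fin m → σ → K) (S : Finset σ) : K :=
  if h : S.card = m then
    (Matrix.of fun i k : Fin m => N i (S.orderEmbOfFin h k)).det else 0

/-- If the columns of `N` indexed by `T` sum to `1`, the alternating sum of the maximal minors of
these columns is zero: it is the determinant of the matrix obtained by adding a first row of ones,
which is the sum of the other rows. -/
lemma sum_minor {m : ℕ} (N : Fin m → σ → K) (T : Finset σ)
    (hT : T.card = m + 1) (hN : ∀ a ∈ T, ∑ i, N i a = 1) :
    ∑ a ∈ T, (sg a T : K) * minor N (T.erase a) = 0 := by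
  let e := T.orderEmbOfFin hT
  have he : ∀ k, e k ∈ T := fun k => T.orderEmbOfFin_mem hT k
  let A : Matrix (Fin (m + 1)) (Fin (m + 1)) K :=
    Matrix.of fun i k => Fin.cases 1 (fun i' => N i' (e k)) i
  have hdet : A.det = 0 := by
    rw [← Matrix.exists_vecMul_eq_zero_iff]
    refine ⟨Fin.cases 1 fun _ => -1, fun h => by simpa using congrFun h 0, ?_⟩
    ext k
    simp [A, Matrix.vecMul, dotProduct, Fin.sum_univ_succ, hN _ (he k)]
  rw [Matrix.det_succ_row_zero] at hdet
  rw [← hdet]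
  symm
  refine Finset.sum_bij (fun k _ => e k) (fun k _ => he k)
    (fun k _ l _ h => e.injective h) ?_ ?_
  · intro a ha
    have : a ∈ Set.range e := by rw [Finset.range_orderEmbOfFin]; exact ha
    obtain ⟨k, rfl⟩ := this
    exact ⟨k, mem_univ _, rfl⟩
  · intro k _
    have hcard : (T.erase (e k)).card = m := by rw [card_erase_of_mem (he k), hT]; rfl
    have horder : (e ∘ k.succAbove) = (T.erase (e k)).orderEmbOfFin hcard := by
      refine Finset.orderEmbOfFin_unique hcard (fun l => ?_)
        (e.strictMono.comp (Fin.strictMono_succAbove k))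
      simp [he, Fin.succAbove_ne]
    have hsg : sg (e k) T = (-1) ^ (k : ℕ) := by
      rw [sg]
      congr 1
      have : T.filter (fun b => b < e k) = (Finset.Iio k).map e.toEmbedding := by
        ext b
        simp only [mem_filter, mem_map, mem_Iio]
        constructor
        · rintro ⟨hb, hbk⟩
          have : b ∈ Set.range e := by rw [Finset.range_orderEmbOfFin]; exact hb
          obtain ⟨l, rfl⟩ := this
          exact ⟨l, e.lt_iff_lt.mp hbk, rfl⟩
        · rintro ⟨l, hl, rfl⟩
          exact ⟨he l, e.lt_iff_lt.mpr hl⟩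
      rw [this, card_map, Fin.card_Iio]
    rw [hsg, minor, dif_pos hcard]
    have hsub : A.submatrix Fin.succ k.succAbove =
        Matrix.of fun i l : Fin m => N i ((T.erase (e k)).orderEmbOfFin hcard l) := by
      ext i l
      rw [← horder]
      rfl
    rw [hsub]
    simp [A]

/-- If each member `v` of `H ⊆ G` contains a variable `x v` lying in no other member of `H`, and
no generator outside `H` is supported in the union `U` of `H`, then `R/I` has a nonzero Betti
number in homological degree `|H|` and internal degree `|U|`. The cycle is
`x^(U ∖ P) e_P`, where `P` is the set of the `x v`. -/
lemma bettiNe_of_private (G H : Finset (Finset σ)) (x : Finset σ → σ)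
    (hx : ∀ v ∈ H, x v ∈ v) (hx' : ∀ v ∈ H, ∀ w ∈ H, x v ∈ w → w = v)
    (hG : ∀ g ∈ G, g ⊆ H.biUnion id → g ∈ H) (hHG : H ⊆ G) :
    BettiNe σ K (monIdeal σ K G) H.card (H.biUnion id).card := by
  set U := H.biUnion id with hU
  set m := H.card with hm
  let P := H.image x
  have hPm : P.card = m := card_image_of_injOn fun v hv w hw h => 
    hx' w hw v hv (h ▸ hx v hv)
  have hPU : P ⊆ U := by
    intro a ha
    obtain ⟨v, hv, rfl⟩ := mem_image.mp ha
    exact mem_biUnion.mpr ⟨v, hv, hx v hv⟩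
  -- `τ` assigns to each variable of `U` a generator in `H` containing it
  have hτ : ∀ a, ∃ v, a ∈ U → v ∈ H ∧ a ∈ v := by
    intro a
    by_cases ha : a ∈ U
    · obtain ⟨v, hv, hav⟩ := mem_biUnion.mp ha
      exact ⟨v, fun _ => ⟨hv, hav⟩⟩
    · exact ⟨∅, fun h => absurd h ha⟩
  choose τ hτ using hτ
  have hτx : ∀ v ∈ H, τ (x v) = v := fun v hv =>
    have h := hτ (x v) (hPU (mem_image_of_mem x hv))
    hx' v hv _ h.1 h.2
  let e : Fin m ≃ H := H.equivFin.symm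
  let N : Fin m → σ → K := fun i a => if τ a = (e i).1 then 1 else 0
  have hN : ∀ a ∈ U, ∑ i, N i a = 1 := by
    intro a ha
    rw [sum_eq_single (e.symm ⟨τ a, (hτ a ha).1⟩)]
    · simp [N]
    · intro i _ hi
      refine if_neg fun h => hi ?_
      rw [Equiv.eq_symm_apply]
      exact Subtype.ext h.symm
    · simp
  -- the functional `minor N` is supported on the transversals of `H`
  have hhit : ∀ S ⊆ U, minor N S ≠ 0 → ∀ v ∈ H, ∃ a ∈ S, a ∈ v := by
    intro S hS hne v hv
    by_contra! hmiss
    apply hne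
    rw [minor]
    split_ifs with hc
    · refine Matrix.det_eq_zero_of_row_eq_zero (e.symm ⟨v, hv⟩) fun k => ?_
      have hk := S.orderEmbOfFin_mem hc k
      refine if_neg fun h => hmiss _ hk ?_
      have := (hτ _ (hS hk)).2
      rwa [h, Equiv.apply_symm_apply] at this
    · rfl
  have hP0 : minor N P ≠ 0 := by
    rw [minor, dif_pos hPm]
    intro h0
    obtain ⟨w, hw, hw0⟩ := Matrix.exists_vecMul_eq_zero_iff.mpr h0
    apply hw
    ext i
    have : x (e i).1 ∈ Set.range (P.orderEmbOfFin hPm) := by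
      rw [Finset.range_orderEmbOfFin]
      exact mem_image_of_mem x (e i).2
    obtain ⟨k, hk⟩ := this
    have h := congrFun hw0 k
    simpa [Matrix.vecMul, dotProduct, N, hk, hτx _ (e i).2, Subtype.val_inj] using h
  -- `x^(U ∖ S)` is not in the ideal if `S` is such a transversal
  have hkill : ∀ S ⊆ U, ∀ f ∈ monIdeal σ K G, minor N S * coeff (ind (U \ S)) f = 0 := by
    intro S hS f hf
    by_contra hne
    obtain ⟨g, hg, hle⟩ := (mem_monIdeal G f).mp hf _ (right_ne_zero_of_mul hne)
    have hsub : g ⊆ U \ S := by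
      intro a ha
      by_contra h
      simpa [ind_apply, h] using hle a ha
    obtain ⟨a, haS, hag⟩ := hhit S hS (left_ne_zero_of_mul hne) g
      (hG g hg (hsub.trans sdiff_subset))
    exact (mem_sdiff.mp (hsub hag)).2 haS
  let z : MvPolynomial σ K := monomial (ind (U \ P)) 1
  let Z : Finset σ → MvPolynomial σ K := fun T => if T = P then z else 0
  refine ⟨Finsupp.single ⟨P, hPm⟩ (Ideal.Quotient.mk _ z), ?_, ?_, ?_⟩
  · intro T
    refine ⟨Z T.1, ?_, ?_⟩
    · simp only [Z]
      split_ifs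
      · refine isHomogeneous_monomial _ ?_
        rw [Finsupp.degree_eq_sum]
        simp only [ind_apply]
        rw [← hPm, ← card_sdiff_of_subset hPU, card_eq_sum_ones, ← sum_filter]
        exact sum_congr (by ext; simp) fun _ _ => rfl
      · exact isHomogeneous_zero _ _ _
    · by_cases h : T.1 = P
      · have : T = ⟨P, hPm⟩ := Subtype.ext h
        simp [Z, this]
      · have : (⟨P, hPm⟩ : KT σ m) ≠ T := fun h' => h (congrArg Subtype.val h'.symm)
        simp [Z, h, Finsupp.single_eq_of_ne' this]
  · ext S : 1
    rw [kd_apply _ _ _ Z, Finsupp.zero_apply, Ideal.Quotient.eq_zero_iff_mem, D]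
    · refine sum_mem fun a ha => zsmul_mem ?_ _
      by_cases h : insert a S.1 = P
      · simp only [Z, if_pos h, z]
        obtain ⟨v, hv, rfl⟩ : ∃ v ∈ H, x v = a := by
          have : a ∈ P := by rw [← h]; exact mem_insert_self a S.1
          exact mem_image.mp this
        rw [mem_monIdeal]
        intro μ hμ
        refine ⟨v, hHG hv, fun b hb => ?_⟩
        rw [X, monomial_mul, coeff_monomial] at hμ
        have hμ' : Finsupp.single (x v) 1 + ind (U \ P) = μ := by
          by_contra h; simp [h] at hμ
        rw [← hμ', Finsupp.add_apply, ind_apply]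
        by_cases hbx : b = x v
        · simp [hbx]
        · have hbP : b ∉ P := by
            intro hbP
            obtain ⟨w, hw, rfl⟩ := mem_image.mp hbP
            exact hbx (by rw [hx' w hw v hv hb])
          have hbU : b ∈ U := mem_biUnion.mpr ⟨v, hv, hb⟩
          simp [hbP, hbU]
      · simp only [Z, if_neg h, mul_zero]
        exact zero_mem _
    · intro T
      by_cases h : T.1 = P
      · have : T = ⟨P, hPm⟩ := Subtype.ext h
        simp [Z, this]
      · have : (⟨P, hPm⟩ : KT σ m) ≠ T := fun h' => h (congrArg Subtype.val h'.symm)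
        simp [Z, h, Finsupp.single_eq_of_ne' this]
    · intro T hT
      have hne : T ≠ P := by rintro rfl; exact hT hPm
      exact if_neg hne
  · intro b hb
    choose q hq using fun T : KT σ (m + 1) => Ideal.Quotient.mk_surjective (b T)
    let F : Finset σ → MvPolynomial σ K :=
      fun T => if h : T.card = m + 1 then q ⟨T, h⟩ else 0
    have hF0 : ∀ T : Finset σ, T.card ≠ m + 1 → F T = 0 := fun T hT => dif_neg hT
    have hFb : ∀ S : Finset σ, S.card = m → D F S - Z S ∈ monIdeal σ K G := by
      intro S hS
      have h1 := kd_apply (monIdeal σ K G) (m + 1) b F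
        (fun T => by rw [← hq]; exact congrArg _ (dif_pos T.2)) hF0 ⟨S, hS⟩
      rw [hb] at h1
      rw [← Ideal.Quotient.eq, ← h1]
      by_cases h : S = P
      · subst h; simp [Z]
      · have : (⟨P, hPm⟩ : KT σ m) ≠ ⟨S, hS⟩ := fun h' => h (congrArg Subtype.val h'.symm)
        simp [Z, h, Finsupp.single_eq_of_ne' this]
    -- evaluate the functional on the boundary of `F` in two ways
    have e1 : ∑ S ∈ U.powersetCard m, minor N S * coeff (ind (U \ S)) (D F S) = minor N P := by
      rw [sum_eq_single P]
      · have := hkill P hPU _ (hFb P hPm)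
        rw [coeff_sub, mul_sub, sub_eq_zero] at this
        rw [this]
        simp [Z, z]
      · intro S hS hne
        obtain ⟨hSU, hSm⟩ := mem_powersetCard.mp hS
        have := hkill S hSU _ (hFb S hSm)
        simpa [Z, hne] using this
      · intro h
        exact absurd (mem_powersetCard.mpr ⟨hPU, hPm⟩) h
    have e2 : ∑ S ∈ U.powersetCard m, minor N S * coeff (ind (U \ S)) (D F S) =
        ∑ T ∈ U.powersetCard (m + 1), coeff (ind (U \ T)) (F T) *
          ∑ a ∈ T, (sg a T : K) * minor N (T.erase a) := by
      have hS : ∀ S ∈ U.powersetCard m, minor N S * coeff (ind (U \ S)) (D F S) =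
          ∑ a ∈ U \ S, minor N S * ((sg a S : K) * coeff (ind (U \ insert a S))
            (F (insert a S))) := by
        intro S hS
        obtain ⟨hSU, hSm⟩ := mem_powersetCard.mp hS
        rw [D, coeff_sum, mul_sum]
        symm
        refine sum_subset_zero_on_sdiff (by intro a; simp) ?_ ?_
        · intro a ha
          have haU : a ∉ U \ S := (mem_sdiff.mp ha).2
          rw [coeff_smul, coeff_X_mul', if_neg (by simpa [ind_apply] using haU), smul_zero,
            mul_zero]
        · intro a ha
          have : ind (U \ S) - Finsupp.single a 1 = ind (U \ insert a S) := by
            ext c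
            by_cases hc : c = a
            · subst hc; simp [ind_apply]; split_ifs <;> simp
            · simp [ind_apply, hc]
          rw [coeff_smul, coeff_X_mul', if_pos (by simpa [ind_apply] using ha), this,
            zsmul_eq_mul]
      rw [sum_congr rfl hS]
      simp_rw [mul_sum]
      rw [sum_sigma', sum_sigma']
      refine sum_bij' (fun p _ => ⟨insert p.2 p.1, p.2⟩) (fun p _ => ⟨p.1.erase p.2, p.2⟩)
        ?_ ?_ ?_ ?_ ?_
      · rintro ⟨S, a⟩ h
        simp only [mem_sigma, mem_powersetCard, mem_sdiff] at h ⊢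
        refine ⟨⟨insert_subset h.2.1 h.1.1, ?_⟩, mem_insert_self _ _⟩
        rw [card_insert_of_notMem h.2.2, h.1.2]
      · rintro ⟨T, a⟩ h
        simp only [mem_sigma, mem_powersetCard, mem_sdiff] at h ⊢
        refine ⟨⟨(erase_subset _ _).trans h.1.1, ?_⟩, h.1.1 h.2, by simp⟩
        rw [card_erase_of_mem h.2, h.1.2]; rfl
      · rintro ⟨S, a⟩ h
        simp only [mem_sigma, mem_sdiff] at h
        simp [erase_insert h.2.2]
      · rintro ⟨T, a⟩ h
        simp only [mem_sigma] at h
        simp [insert_erase h.2]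
      · rintro ⟨S, a⟩ h
        simp only [mem_sigma, mem_sdiff] at h
        simp only [erase_insert h.2.2]
        rw [← sg_erase a (insert a S), erase_insert h.2.2]
        ring
    apply hP0
    rw [← e1, e2]
    refine sum_eq_zero fun T hT => ?_
    obtain ⟨hTU, hTm⟩ := mem_powersetCard.mp hT
    rw [sum_minor N T hTm fun a ha => hN a (hTU ha), mul_zero]

end SqfreeReg

/-! ### The regularity bound -/

/-- Proposition `Pmatch`: suppose `dim H(I) = 1` and there
are closed vertices `c_1,…,c_t` (the members of `C`) such that (1) no two of
them are neighbors, (2) every open vertex has some `c_i` as a neighbor, and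
(3) each `c_i` has a unique label on its singleton edge.  Then
`reg(R/I) ≥ |X| − |V|`. -/
theorem stmt_15 (σ : Type) [Fintype σ] [LinearOrder σ] (K : Type) [Field K]
    (G : Finset (Finset σ)) (hmin : MinGens σ G) (hne : ∀ S ∈ G, S.Nonempty)
    (hdim : ∀ a : σ, (EdgeOf σ G a).card ≤ 2)
    (hdim1 : ∃ a : σ, (EdgeOf σ G a).card = 2)
    (C : Finset (Finset σ)) (hCG : C ⊆ G) (hCc : ∀ c ∈ C, Closed σ G c)
    (h1 : ∀ c ∈ C, ∀ c' ∈ C, c' ∉ Neighbors σ G c)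
    (h2 : ∀ v ∈ G, ¬ Closed σ G v → ∃ c ∈ C, c ∈ Neighbors σ G v)
    (h3 : ∀ c ∈ C, ∃! a : σ, EdgeOf σ G a = {c}) :
    ((varsOf σ G).card : ℤ) - (G.card : ℤ) ≤ reg σ K (monIdeal σ K G) := by
  classical
  set H := G \ C with hH
  set U := H.biUnion id with hU
  have hHG : H ⊆ G := sdiff_subset
  have hnb : ∀ c ∈ C, ∀ c' ∈ C, ∀ a, a ∈ c → a ∈ c' → c' = c := by
    intro c hc c' hc' a ha ha'
    by_contra hne
    refine h1 c hc c' hc' ?_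
    simp only [Neighbors, EdgeOf, mem_filter]
    exact ⟨hCG hc', hne, a, ⟨hCG hc, ha⟩, hCG hc', ha'⟩
  have hedge : ∀ {a v}, EdgeOf σ G a = {v} → ∀ w ∈ G, (a ∈ w ↔ w = v) := by
    intro a v h w hw
    rw [← mem_singleton, ← h, EdgeOf, mem_filter]
    simp [hw]
  -- every vertex outside `C` has a variable shared with no other vertex outside `C`
  have hx : ∀ v, ∃ a, v ∈ H → a ∈ v ∧ ∀ w ∈ H, a ∈ w → w = v := by
    intro v
    by_cases hv : v ∈ H
    swap
    · obtain ⟨a, -⟩ := hdim1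
      exact ⟨a, fun h => absurd h hv⟩
    obtain ⟨hvG, hvC⟩ := mem_sdiff.mp hv
    by_cases hcl : Closed σ G v
    · obtain ⟨a, ha⟩ := hcl
      exact ⟨a, fun _ => ⟨(hedge ha v hvG).mpr rfl,
        fun w hw haw => (hedge ha w (hHG hw)).mp haw⟩⟩
    · obtain ⟨c, hc, hcv⟩ := h2 v hvG hcl
      obtain ⟨-, hne', a, hva, hca⟩ := mem_filter.mp hcv
      refine ⟨a, fun _ => ⟨(mem_filter.mp hva).2, fun w hw haw => ?_⟩⟩
      by_contra hwv
      -- otherwise `v`, `c`, `w` are three vertices on the edge labeled by `a`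
      have hwc : w ≠ c := fun h => (mem_sdiff.mp hw).2 (h ▸ hc)
      have hsub : ({v, c, w} : Finset (Finset σ)) ⊆ EdgeOf σ G a := by
        intro u hu
        simp only [mem_insert, mem_singleton] at hu
        rcases hu with rfl | rfl | rfl
        · exact hva
        · exact hca
        · exact mem_filter.mpr ⟨hHG hw, haw⟩
      have h3' : ({v, c, w} : Finset (Finset σ)).card = 3 :=
        card_eq_three.mpr ⟨v, c, w, hne'.symm, Ne.symm hwv, hwc.symm, rfl⟩
      have := card_le_card hsub
      have := hdim a
      omega
  choose x hx using hx
  have hbetti : BettiNe σ K (monIdeal σ K G) H.card U.card := by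
    refine SqfreeReg.bettiNe_of_private G H x (fun v hv => (hx v hv).1)
      (fun v hv => (hx v hv).2) ?_ hHG
    intro g hg hgU
    refine mem_sdiff.mpr ⟨hg, fun hgC => ?_⟩
    obtain ⟨a, ha⟩ := hCc g hgC
    obtain ⟨v, hv, hav⟩ := mem_biUnion.mp (hgU ((hedge ha g hg).mpr rfl))
    have := (hedge ha v (hHG hv)).mp hav
    exact (mem_sdiff.mp hv).2 (this ▸ hgC)
  -- a variable outside `U` is the unique label of the singleton edge of a member of `C`
  have hcount : (varsOf σ G \ U).card ≤ C.card := by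
    have hlab : ∀ a, ∃ c, a ∈ varsOf σ G \ U → c ∈ C ∧ EdgeOf σ G a = {c} := by
      intro a
      by_cases ha : a ∈ varsOf σ G \ U
      swap
      · exact ⟨∅, fun h => absurd h ha⟩
      obtain ⟨haX, haU⟩ := mem_sdiff.mp ha
      obtain ⟨c, hcG, hac⟩ := mem_biUnion.mp haX
      have hC : ∀ w ∈ G, a ∈ w → w ∈ C := by
        intro w hw haw
        by_contra hwC
        exact haU (mem_biUnion.mpr ⟨w, mem_sdiff.mpr ⟨hw, hwC⟩, haw⟩)
      refine ⟨c, fun _ => ⟨hC c hcG hac, ?_⟩⟩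
      ext w
      rw [EdgeOf, mem_filter, mem_singleton]
      constructor
      · rintro ⟨hw, haw⟩
        exact hnb c (hC c hcG hac) w (hC w hw haw) a hac haw
      · rintro rfl
        exact ⟨hcG, hac⟩
    choose l hl using hlab
    refine card_le_card_of_injOn l (fun a ha => (hl a ha).1) fun a ha b hb hab => ?_
    obtain ⟨haC, hea⟩ := hl a ha
    exact (h3 (l a) haC).unique hea (hab ▸ (hl b hb).2)
  have hX : (varsOf σ G).card ≤ U.card + C.card := by
    have := card_le_card_sdiff_add_card (s := varsOf σ G) (t := U)
    omega
  have hV : G.card = H.card + C.card := (card_sdiff_add_card_eq_card hCG).symm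
  have hle : (U.card : ℤ) - H.card ≤ reg σ K (monIdeal σ K G) := by
    refine le_csSup ⟨(Fintype.card σ : ℤ), ?_⟩ ⟨H.card, U.card, hbetti, rfl⟩
    rintro d ⟨i, j, hij, rfl⟩
    exact SqfreeReg.le_of_bettiNe G i j hij
  omega
end

section
/- Let I ⊆ R be a square-free monomial ideal with labeled hypergraph H = H(I) = (V, X, E, 𝓔) of dimension 1. Suppose there exist closed vertices c_1,...,c_t such that: (1) c_i ∉ N_H(c_j) for all i < j; (2) every open vertex has some c_i as a neighbor; (3) for each i there is a unique variable a ∈ X with E_a = {c_i}; and (4) all open vertices are isolated (every neighbor of an open vertex is closed). Then reg(R/I) = |X| − |V|. -/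
/-!
The Koszul homology of `R / I` splits by multidegree `α`. In multidegree `α` it is the homology of
chains on the sets `T ⊆ supp α` for which `x ^ α`, divided by the square-free monomial on `T`, is
not in `I`. When some exponent of `α` is at least `2` this has a cone point (`acyc_cone`), so only
`α = U` square-free matters, and there the sets `T` are the subsets of `U` meeting every generator
contained in `U`.

The engine is `acyc_step`: if `w` is a member of a family with a private point `a` (a point in no
other member), then matching `T` with `T ∪ {a}` leaves only the sets with `T ∩ w = {a}`, so the
homology is that of the family `{w' \ w}` on `U \ w`, shifted by one. By induction a family all of
whose members have private points has homology only in degree equal to its cardinality, and only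
if it covers `U` (`acyc_saturated`); a family with a member covered by others which have private
points has none (`acyc_covered`).

Upper bound: let `G'` be the generators contained in `U`. If an open vertex of `G'` has each of its
variables in another member of `G'`, all its neighbours being closed, the homology vanishes.
Otherwise every member of `G'` has a private point with respect to `G'`, so the only homology is in
degree `|G'|`, when `G'` covers `U`. Then the generators outside `G'` inject into the variables
outside `U`, a closed one through a private variable and an open one through any variable outside
`U`; this is injective because open vertices are isolated. So `|U| - |G'| ≤ |X| - |V|`.

Lower bound: remove from `X` the unique private labels of the members of `C`. The generators
supported on the remaining set `Y` are those outside `C`; they cover `Y`, and each has a private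
variable, an open one through the edge it shares with a member of `C`. So there is homology in
multidegree `Y` and degree `|V| - |C|`, and `|Y| - (|V| - |C|) = |X| - |V|`.
-/

/-!
Common setup: square-free monomial ideals in `R = K[A]` (here `MvPolynomial σ K`
with `σ` the finite alphabet `A`), encoded by the finite antichain `G` of
supports of their minimal monomial generators; the labeled hypergraph `H(I)`
of such an ideal, whose vertex set is (in bijection with) `G` and whose edge
labeled by a variable `a` is `E_a = { S ∈ G : a ∈ S }`; and Castelnuovo–Mumford
regularity and projective dimension of `R/I`, defined via graded Betti numbers
`β_{ij}(R/I) = dim_K Tor_i^R(R/I, K)_j`, which are computed from the Koszul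
complex of the variables tensored with `R/I`.
-/

open MvPolynomial Finset
open scoped Classical

namespace SqfreeHyp

/-! ### Chains of hitting sets -/

section Chains

set_option linter.unusedSectionVars false

variable {σ : Type} [Fintype σ] [LinearOrder σ] {A : Type} [AddCommGroup A]

/-- The Koszul sign attached to removing `b` from `insert b T`. -/
def sg (b : σ) (T : Finset σ) : ℤ := (-1) ^ (T.filter (· < b)).card

/-- The simplicial boundary operator, on chains written as functions of a finite set. -/
def bd (f : Finset σ → A) (T : Finset σ) : A := ∑ b ∈ Tᶜ, sg b T • f (insert b T)

/-- Exterior multiplication by `a`, the standard contracting homotopy of `bd`. -/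
def cn (a : σ) (f : Finset σ → A) (T : Finset σ) : A :=
  if a ∈ T then sg a (T.erase a) • f (T.erase a) else 0

/-- The slice of a chain at `a`: its coefficients at the sets containing `a`, with `a` removed. -/
def sl (a : σ) (f : Finset σ → A) (T : Finset σ) : A :=
  if a ∈ T then 0 else sg a T • f (insert a T)

lemma sg_mul_self (a : σ) (T : Finset σ) : sg a T * sg a T = 1 := by
  unfold sg; rw [← pow_add, ← two_mul, pow_mul]; simp

lemma sg_smul_smul (a : σ) (T : Finset σ) (x : A) : sg a T • sg a T • x = x := by
  rw [smul_smul, sg_mul_self, one_smul]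

lemma sg_insert {a b : σ} {T : Finset σ} (ha : a ∉ T) :
    sg b (insert a T) = (if a < b then -1 else 1) * sg b T := by
  unfold sg
  rw [Finset.filter_insert]
  split_ifs with h
  · rw [Finset.card_insert_of_notMem (by simp [ha]), pow_succ]; ring
  · simp

lemma sg_comm {a b : σ} {T : Finset σ} (hab : a ≠ b) (ha : a ∉ T) (hb : b ∉ T) :
    sg a T * sg b (insert a T) = -(sg b T * sg a (insert b T)) := by
  rw [sg_insert ha, sg_insert hb]
  rcases lt_or_gt_of_ne hab with h | h
  · simp [h, h.not_gt]; ring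
  · simp [h, h.not_gt]; ring

lemma sg_comm' {a b : σ} {T : Finset σ} (hab : a ≠ b) (ha : a ∉ T) (hb : b ∉ T) :
    sg b (insert a T) * sg a (insert b T) = -(sg a T * sg b T) := by
  rw [sg_insert ha, sg_insert hb]
  rcases lt_or_gt_of_ne hab with h | h
  · simp [h, h.not_gt]; ring
  · simp [h, h.not_gt]; ring

lemma bd_bd (f : Finset σ → A) (T : Finset σ) : bd (bd f) T = 0 := by
  unfold bd
  simp only [Finset.smul_sum, smul_smul]
  rw [Finset.sum_sigma']
  refine Finset.sum_involution (fun p _ => ⟨p.2, p.1⟩) ?_ ?_ ?_ ?_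
  · rintro ⟨a, b⟩ h
    simp only [Finset.mem_sigma, Finset.mem_compl, Finset.mem_insert, not_or] at h
    obtain ⟨ha, hba, hb⟩ := h
    simp only
    rw [Finset.insert_comm b a, ← add_smul, sg_comm (Ne.symm hba) ha hb]
    simp
  · rintro ⟨a, b⟩ h _ h2
    simp only [Finset.mem_sigma, Finset.mem_compl, Finset.mem_insert, not_or] at h
    simp only [Sigma.mk.injEq] at h2
    exact h.2.1 h2.1
  · rintro ⟨a, b⟩ h
    simp only [Finset.mem_sigma, Finset.mem_compl, Finset.mem_insert, not_or] at h ⊢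
    exact ⟨h.2.2, fun e => h.2.1 e.symm, h.1⟩
  · intros; rfl

lemma bd_cn (a : σ) (f : Finset σ → A) (T : Finset σ) :
    bd (cn a f) T = f T - cn a (bd f) T := by
  by_cases ha : a ∈ T
  · obtain ⟨T, hT, rfl⟩ : ∃ S, a ∉ S ∧ insert a S = T :=
      ⟨T.erase a, by simp, Finset.insert_erase ha⟩
    have e : Tᶜ = insert a (insert a T)ᶜ := by
      ext x; by_cases h : x = a <;> simp [h, hT]
    simp only [cn, bd, Finset.mem_insert_self, if_true, Finset.erase_insert hT]
    rw [e, Finset.sum_insert (by simp), smul_add, sg_smul_smul, sub_add_cancel_left,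
      Finset.smul_sum, ← Finset.sum_neg_distrib]
    refine Finset.sum_congr rfl fun b hb => ?_
    simp only [Finset.mem_compl, Finset.mem_insert, not_or] at hb
    rw [Finset.erase_insert_of_ne (a := b) (b := a) hb.1, Finset.erase_insert hT,
      if_pos (by simp), smul_smul, smul_smul, sg_comm' (Ne.symm hb.1) hT hb.2, neg_smul]
  · have : cn a (bd f) T = 0 := by simp [cn, ha]
    rw [this, sub_zero, bd, Finset.sum_eq_single a]
    · simp only [cn, Finset.mem_insert_self, if_true, Finset.erase_insert ha]
      exact sg_smul_smul _ _ _
    · intro b _ hba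
      simp [cn, ha, Ne.symm hba]
    · intro h; simp [ha] at h

lemma bd_sl (a : σ) (f : Finset σ → A) (T : Finset σ) :
    bd (sl a f) T = - sl a (bd f) T := by
  by_cases ha : a ∈ T
  · simp [bd, sl, ha]
  · have e : Tᶜ = insert a (insert a T)ᶜ := by
      ext x; by_cases h : x = a <;> simp [h, ha]
    simp only [sl, bd, ha, if_false]
    rw [e, Finset.sum_insert (by simp), if_pos (by simp), smul_zero, zero_add, Finset.smul_sum,
      ← Finset.sum_neg_distrib]
    refine Finset.sum_congr rfl fun b hb => ?_
    simp only [Finset.mem_compl, Finset.mem_insert, not_or] at hb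
    rw [if_neg (by simp [ha, Ne.symm hb.1]), smul_smul, smul_smul, Finset.insert_comm a b,
      sg_comm hb.1 hb.2 ha, neg_smul]

lemma cn_sl (a : σ) (f : Finset σ → A) {T : Finset σ} (ha : a ∈ T) :
    cn a (sl a f) T = f T := by
  simp [cn, sl, ha, sg_smul_smul]

lemma bd_eq_zero {f : Finset σ → A} {T : Finset σ} (h : ∀ S, T ⊆ S → f S = 0) : bd f T = 0 :=
  Finset.sum_eq_zero fun b _ => by rw [h _ (Finset.subset_insert b T), smul_zero]

lemma bd_congr {f g : Finset σ → A} {T : Finset σ} (h : ∀ S, T ⊆ S → f S = g S) :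
    bd f T = bd g T :=
  Finset.sum_congr rfl fun b _ => by rw [h _ (Finset.subset_insert b T)]

lemma bd_sub (f g : Finset σ → A) (T : Finset σ) :
    bd (fun S => f S - g S) T = bd f T - bd g T := by
  simp [bd, smul_sub]

/-- `T` is a subset of `U` meeting every member of `G`. -/
def Hit (U : Finset σ) (G : Finset (Finset σ)) (T : Finset σ) : Prop :=
  T ⊆ U ∧ ∀ w ∈ G, ∃ b ∈ T, b ∈ w

/-- `f` is a chain of sets of size `i` satisfying `P`. -/
def ChainOn (P : Finset σ → Prop) (i : ℕ) (f : Finset σ → A) : Prop :=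
  ∀ T, f T ≠ 0 → P T ∧ T.card = i

variable (A) in
/-- Vanishing of the `i`-th homology, with coefficients in `A`, of the quotient of the full simplex
by the faces not satisfying `P`. -/
def Acyc (P : Finset σ → Prop) (i : ℕ) : Prop :=
  ∀ f : Finset σ → A, ChainOn P i f → (∀ T, P T → bd f T = 0) →
    ∃ g : Finset σ → A, ChainOn P (i + 1) g ∧ ∀ T, P T → bd g T = f T

lemma Hit.mono {U : Finset σ} {G : Finset (Finset σ)} {T S : Finset σ} (h : Hit U G T)
    (hTS : T ⊆ S) (hS : S ⊆ U) : Hit U G S :=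
  ⟨hS, fun w hw => let ⟨b, hb, hw⟩ := h.2 w hw; ⟨b, hTS hb, hw⟩⟩

lemma ChainOn.cn {U : Finset σ} {G : Finset (Finset σ)} {i : ℕ} {f : Finset σ → A} {a : σ}
    (haU : a ∈ U) (hf : ChainOn (Hit U G) i f) : ChainOn (Hit U G) (i + 1) (cn a f) := by
  intro T hT
  by_cases ha : a ∈ T
  · simp only [SqfreeHyp.cn, ha, if_true] at hT
    obtain ⟨h1, h2⟩ := hf (T.erase a) (fun h => hT (by rw [h, smul_zero]))
    refine ⟨h1.mono (Finset.erase_subset _ _) ?_, ?_⟩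
    · rw [← Finset.insert_erase ha]
      exact Finset.insert_subset haU h1.1
    · rw [← h2, Finset.card_erase_add_one ha]
  · simp [SqfreeHyp.cn, ha] at hT

lemma acyc_of_forall_not {P : Finset σ → Prop} {i : ℕ} (h : ∀ T, P T → T.card ≠ i) :
    Acyc A P i := by
  intro f hf _
  have : f = fun _ => 0 := by
    funext T; by_contra hT; exact h T (hf T hT).1 (hf T hT).2
  subst this
  exact ⟨fun _ => 0, fun T hT => (hT rfl).elim, fun T _ => by simp [bd]⟩

/-- A vertex of `U` lying in no member of `G` is a cone point. -/
lemma acyc_cone {U : Finset σ} {G : Finset (Finset σ)} {a : σ} (haU : a ∈ U)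
    (ha : ∀ w ∈ G, a ∉ w) (i : ℕ) : Acyc A (Hit U G) i := by
  intro f hf hc
  refine ⟨cn a f, hf.cn haU, fun T hT => ?_⟩
  rw [bd_cn]
  by_cases haT : a ∈ T
  · simp only [cn, haT, if_true]
    rw [hc, smul_zero, sub_zero]
    refine ⟨(Finset.erase_subset _ _).trans hT.1, fun w hw => ?_⟩
    obtain ⟨b, hb, hbw⟩ := hT.2 w hw
    exact ⟨b, Finset.mem_erase.2 ⟨fun e => ha w hw (e ▸ hbw), hb⟩, hbw⟩
  · simp [cn, haT]

/-- The family left after deleting the points of `w`, and `w` itself, from the family `G`. -/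
def del (w : Finset σ) (G : Finset (Finset σ)) : Finset (Finset σ) := (G.erase w).image (· \ w)

/-- `a` is a point of `w` lying in no other member of `G`. -/
def Priv (G : Finset (Finset σ)) (w : Finset σ) (a : σ) : Prop :=
  a ∈ w ∧ ∀ w' ∈ G, a ∈ w' → w' = w

lemma hit_del_iff {U w : Finset σ} {G : Finset (Finset σ)} {T : Finset σ} :
    Hit (U \ w) (del w G) T ↔
      T ⊆ U ∧ (∀ b ∈ T, b ∉ w) ∧ ∀ w' ∈ G, w' ≠ w → ∃ b ∈ T, b ∈ w' := by
  constructor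
  · rintro ⟨h1, h3⟩
    refine ⟨h1.trans Finset.sdiff_subset, fun b hb => (Finset.mem_sdiff.1 (h1 hb)).2,
      fun w' hw' hne => ?_⟩
    obtain ⟨b, hb, h⟩ := h3 (w' \ w) (Finset.mem_image_of_mem _ (Finset.mem_erase.2 ⟨hne, hw'⟩))
    exact ⟨b, hb, (Finset.mem_sdiff.1 h).1⟩
  · rintro ⟨h1, h2, h3⟩
    refine ⟨fun b hb => Finset.mem_sdiff.2 ⟨h1 hb, h2 b hb⟩, fun w' hw' => ?_⟩
    simp only [del, Finset.mem_image, Finset.mem_erase] at hw'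
    obtain ⟨u, ⟨hne, hu⟩, rfl⟩ := hw'
    obtain ⟨b, hb, h⟩ := h3 u hu hne
    exact ⟨b, hb, Finset.mem_sdiff.2 ⟨h, h2 b hb⟩⟩

section Step

variable {U w : Finset σ} {G : Finset (Finset σ)} {a : σ}

/-- Among the sets hitting `G`, those from which the private point `a` of `w` can not be removed
are exactly the `insert a T` with `T` hitting the deleted family. -/
lemma hit_insert_iff (hw : w ∈ G) (ha : Priv G w a) (haU : a ∈ U) {T : Finset σ} (haT : a ∉ T) :
    Hit (U \ w) (del w G) T ↔ Hit U G (insert a T) ∧ ¬ Hit U G T := by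
  rw [hit_del_iff]
  constructor
  · rintro ⟨h1, h2, h3⟩
    refine ⟨⟨Finset.insert_subset haU h1, fun w' hw' => ?_⟩, fun h => ?_⟩
    · by_cases e : w' = w
      · exact ⟨a, by simp, e ▸ ha.1⟩
      · obtain ⟨b, hb, h⟩ := h3 w' hw' e
        exact ⟨b, by simp [hb], h⟩
    · obtain ⟨b, hb, h⟩ := h.2 w hw
      exact h2 b hb h
  · rintro ⟨h1, h2⟩
    have hU : T ⊆ U := (Finset.subset_insert _ _).trans h1.1
    have key : ∀ w' ∈ G, w' ≠ w → ∃ b ∈ T, b ∈ w' := by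
      intro w' hw' hne
      obtain ⟨b, hb, h⟩ := h1.2 w' hw'
      rcases Finset.mem_insert.1 hb with rfl | hb
      · exact (hne (ha.2 w' hw' h)).elim
      · exact ⟨b, hb, h⟩
    refine ⟨hU, fun b hb hbw => h2 ⟨hU, fun w' hw' => ?_⟩, key⟩
    by_cases e : w' = w
    · exact ⟨b, hb, e ▸ hbw⟩
    · have hfin := key w' hw' e
      exact hfin

/-- Modulo a boundary, a chain `f` of hitting sets becomes the exterior product of `a` with a chain
for the deleted family, as soon as `bd f` vanishes at the hitting sets avoiding `a`. -/
lemma reduce (hw : w ∈ G) (ha : Priv G w a) (haU : a ∈ U) {i : ℕ} {f : Finset σ → A}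
    (hf : ChainOn (Hit U G) (i + 1) f) (hc : ∀ T, Hit U G T → a ∉ T → bd f T = 0) :
    ∃ r : Finset σ → A, (∀ T, Hit U G T → r T = f T - bd (cn a f) T) ∧
      (∀ T, cn a (sl a r) T = r T) ∧ ChainOn (Hit (U \ w) (del w G)) i (sl a r) ∧
      ∀ T, Hit U G T → bd r T = bd f T := by
  have hg := hf.cn haU
  set r : Finset σ → A := fun S => if Hit U G S then f S - bd (cn a f) S else 0 with hr
  have hrs : ∀ T, r T ≠ 0 → Hit U G T ∧ a ∈ T ∧ ¬ Hit U G (T.erase a) ∧ T.card = i + 1 := by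
    intro T hT
    by_cases hP : Hit U G T
    · simp only [hr, hP, if_true, bd_cn, sub_sub_cancel] at hT
      by_cases haT : a ∈ T
      · simp only [cn, haT, if_true] at hT
        have h0 : bd f (T.erase a) ≠ 0 := fun h => hT (by rw [h, smul_zero])
        refine ⟨hP, haT, fun h => h0 (hc _ h (by simp)), ?_⟩
        obtain ⟨b, hb, h⟩ := Finset.exists_ne_zero_of_sum_ne_zero h0
        have h' := (hf _ (fun e => h (by rw [e, smul_zero]))).2
        rw [Finset.card_insert_of_notMem (Finset.mem_compl.1 hb)] at h'
        rw [← Finset.card_erase_add_one haT, h']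
      · simp [cn, haT] at hT
    · simp [hr, hP] at hT
  refine ⟨r, fun T hT => by simp [hr, hT], fun T => ?_, fun T hT => ?_, fun T hT => ?_⟩
  · by_cases haT : a ∈ T
    · exact cn_sl a r haT
    · have : r T = 0 := by by_contra h; exact haT (hrs T h).2.1
      simp [cn, haT, this]
  · by_cases haT : a ∈ T
    · simp [sl, haT] at hT
    · simp only [sl, haT, if_false] at hT
      obtain ⟨h1, -, h3, h4⟩ := hrs (insert a T) (fun e => hT (by rw [e, smul_zero]))
      rw [Finset.erase_insert haT] at h3
      rw [Finset.card_insert_of_notMem haT] at h4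
      exact ⟨(hit_insert_iff hw ha haU haT).2 ⟨h1, h3⟩, by omega⟩
  · rw [← sub_zero (bd f T), ← bd_bd (cn a f) T, ← bd_sub]
    refine bd_congr fun S hS => ?_
    by_cases hP : Hit U G S
    · simp [hr, hP]
    · -- a superset of `T` which is not a hitting set is not contained in `U`
      have hSU : ¬ S ⊆ U := fun h => hP (hT.mono hS h)
      have h1 : f S = 0 := by by_contra h; exact hSU (hf S h).1.1
      have h2 : bd (cn a f) S = 0 :=
        bd_eq_zero fun S' hS' => by by_contra h; exact hSU (hS'.trans (hg S' h).1.1)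
      simp [hr, hP, h1, h2]

lemma not_hit_superset (hw : w ∈ G) {T S : Finset σ} (hT : Hit U G T) (hTS : T ⊆ S) :
    ¬ Hit (U \ w) (del w G) S := by
  intro h
  obtain ⟨b, hb, hbw⟩ := hT.2 w hw
  exact (hit_del_iff.1 h).2.1 b (hTS hb) hbw

lemma chainOn_cn_del (hw : w ∈ G) (ha : Priv G w a) (haU : a ∈ U) {i : ℕ} {f : Finset σ → A}
    (hf : ChainOn (Hit (U \ w) (del w G)) i f) : ChainOn (Hit U G) (i + 1) (cn a f) := by
  intro T hT
  by_cases haT : a ∈ T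
  · simp only [cn, haT, if_true] at hT
    have h := hf (T.erase a) (fun e => hT (by rw [e, smul_zero]))
    rw [hit_insert_iff hw ha haU (by simp), Finset.insert_erase haT] at h
    exact ⟨h.1.1, by rw [← h.2, Finset.card_erase_add_one haT]⟩
  · simp [cn, haT] at hT

/-- On hitting sets for `G`, exterior multiplication by `a` anticommutes with `bd` on chains for
the deleted family. -/
lemma bd_cn_del (hw : w ∈ G) {i : ℕ} {f : Finset σ → A}
    (hf : ChainOn (Hit (U \ w) (del w G)) i f) {T : Finset σ} (hT : Hit U G T) :
    bd (cn a f) T = - cn a (bd f) T := by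
  have : f T = 0 := by
    by_contra h; exact not_hit_superset hw hT subset_rfl (hf T h).1
  rw [bd_cn, this, zero_sub]

/-- A boundary `bd f` of a chain for the deleted family, multiplied by `a`, is determined on
hitting sets for `G` by the values of `bd f` on hitting sets for the deleted family. -/
lemma cn_bd_del (hw : w ∈ G) (ha : Priv G w a) (haU : a ∈ U) {i j : ℕ} {f g : Finset σ → A}
    (hf : ChainOn (Hit (U \ w) (del w G)) i f) (hg : ChainOn (Hit (U \ w) (del w G)) j g)
    (hfg : ∀ T, Hit (U \ w) (del w G) T → bd f T = g T) {T : Finset σ} (hT : Hit U G T) :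
    cn a (bd f) T = cn a g T := by
  by_cases haT : a ∈ T
  · simp only [cn, haT, if_true]
    congr 1
    by_cases h : Hit (U \ w) (del w G) (T.erase a)
    · exact hfg _ h
    · have h' : Hit U G (T.erase a) := by
        rw [hit_insert_iff hw ha haU (by simp), Finset.insert_erase haT] at h
        by_contra h2; exact h ⟨hT, h2⟩
      rw [bd_eq_zero]
      · by_contra h2; exact h (hg _ (Ne.symm h2)).1
      · intro S hS
        by_contra h2; exact not_hit_superset hw h' hS (hf S h2).1
  · simp [cn, haT]

/-- Deleting a member `w` with a private point shifts homology by one degree. -/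
lemma acyc_step (hw : w ∈ G) (ha : Priv G w a) (haU : a ∈ U) (i : ℕ) :
    Acyc A (Hit U G) (i + 1) ↔ Acyc A (Hit (U \ w) (del w G)) i := by
  constructor
  · intro H f hf hc
    have hf2 := chainOn_cn_del hw ha haU hf
    obtain ⟨g, hg, hgf⟩ := H (cn a f) hf2 (fun T hT => by
      rw [bd_cn_del hw hf hT, cn_bd_del hw ha haU hf (g := fun _ => 0) (j := 0)
        (fun T h => (h rfl).elim) hc hT]
      simp [cn])
    obtain ⟨r, -, -, h3, h4⟩ := reduce hw ha haU hg (fun T hT haT => by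
      rw [hgf T hT]; simp [cn, haT])
    refine ⟨fun S => - sl a r S, fun T hT => h3 T (fun e => hT (by simp [e])),
      fun T hT => ?_⟩
    have haT : a ∉ T := fun h => (hit_del_iff.1 hT).2.1 a h ha.1
    have e : bd (fun S => - sl a r S) T = - bd (sl a r) T := by simp [bd]
    have hi := ((hit_insert_iff hw ha haU haT).1 hT).1
    rw [e, bd_sl, neg_neg]
    simp only [sl, haT, if_false]
    rw [h4 _ hi, hgf _ hi]
    simp only [cn, Finset.mem_insert_self, if_true, Finset.erase_insert haT]
    exact sg_smul_smul _ _ _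
  · intro H f hf hc
    obtain ⟨r, h1, h2, h3, h4⟩ := reduce hw ha haU hf (fun T hT _ => hc T hT)
    obtain ⟨g, hg, hgf⟩ := H (sl a r) h3 (fun T hT => by
      have haT : a ∉ T := fun h => (hit_del_iff.1 hT).2.1 a h ha.1
      have hi := ((hit_insert_iff hw ha haU haT).1 hT).1
      rw [bd_sl]
      simp [sl, haT, h4 _ hi, hc _ hi])
    have hA := hf.cn haU
    have hB := chainOn_cn_del hw ha haU hg
    refine ⟨fun S => cn a f S - cn a g S, fun T hT => ?_, fun T hT => ?_⟩
    · by_cases h : cn a f T = 0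
      · exact hB T (fun e => hT (by simp [h, e]))
      · exact hA T h
    · rw [bd_sub, bd_cn_del hw hg hT, cn_bd_del hw ha haU hg h3 hgf hT, h2, h1 T hT]
      abel

lemma acyc_zero (hw : w ∈ G) : Acyc A (Hit U G) 0 :=
  acyc_of_forall_not fun T hT h => by
    rw [Finset.card_eq_zero] at h
    subst h
    obtain ⟨b, hb, _⟩ := hT.2 w hw
    simp at hb

end Step

lemma Priv.del {G : Finset (Finset σ)} {w w' : Finset σ} {a : σ} (h : Priv G w' a) (hw : w ∈ G)
    (hne : w' ≠ w) : Priv (del w G) (w' \ w) a := by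
  have haw : a ∉ w := fun h' => hne (h.2 w hw h').symm
  refine ⟨by simp [h.1, haw], fun w'' hw'' hm => ?_⟩
  simp only [SqfreeHyp.del, Finset.mem_image, Finset.mem_erase] at hw''
  obtain ⟨v, ⟨-, hv⟩, rfl⟩ := hw''
  rw [h.2 v hv (Finset.mem_sdiff.1 hm).1]

/-- If `v` is covered by other members of `G`, each of which has a private point, then all the
homology vanishes: deleting these members one by one leaves an empty, hence never met, set. -/
lemma acyc_covered {v : Finset σ} {U : Finset σ} {G : Finset (Finset σ)} (hv : v ∈ G)
    (hU : ∀ w ∈ G, w ⊆ U) (h : ∀ b ∈ v, ∃ w ∈ G, w ≠ v ∧ b ∈ w ∧ ∃ a, Priv G w a) (i : ℕ) :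
    Acyc A (Hit U G) i := by
  induction hn : v.card using Nat.strong_induction_on generalizing v U G i with
  | _ n ih =>
  rcases v.eq_empty_or_nonempty with rfl | ⟨b, hb⟩
  · exact acyc_of_forall_not fun T hT _ => by
      obtain ⟨b, _, hb⟩ := hT.2 _ hv
      simp at hb
  · cases i with
    | zero => exact acyc_zero hv
    | succ i =>
      obtain ⟨w, hw, hne, hbw, a, ha⟩ := h b hb
      rw [acyc_step hw ha (hU w hw ha.1)]
      refine ih (v \ w).card ?_ (v := v \ w) ?_ ?_ ?_ i rfl
      · rw [← hn]
        refine Finset.card_lt_card ⟨Finset.sdiff_subset, fun hs => ?_⟩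
        exact (Finset.mem_sdiff.1 (hs hb)).2 hbw
      · exact Finset.mem_image_of_mem _ (Finset.mem_erase.2 ⟨hne.symm, hv⟩)
      · intro w' hw'
        simp only [del, Finset.mem_image, Finset.mem_erase] at hw'
        obtain ⟨u, ⟨-, hu⟩, rfl⟩ := hw'
        exact Finset.sdiff_subset_sdiff (hU u hu) subset_rfl
      · intro b' hb'
        rw [Finset.mem_sdiff] at hb'
        obtain ⟨u, hu, huv, hbu, c, hc⟩ := h b' hb'.1
        have huw : u ≠ w := fun e => hb'.2 (e ▸ hbu)
        have hP := hc.del hw huw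
        refine ⟨u \ w, Finset.mem_image_of_mem _ (Finset.mem_erase.2 ⟨huw, hu⟩), fun e => ?_,
          Finset.mem_sdiff.2 ⟨hbu, hb'.2⟩, c, hP⟩
        have h1 := hP.1
        rw [e] at h1
        exact huv (hc.2 v hv (Finset.mem_sdiff.1 h1).1).symm

/-- If all members of `G` have private points, the homology is concentrated in degree `|G|`, and is
nonzero there exactly when `G` covers `U`. -/
lemma acyc_saturated [Nontrivial A] {U : Finset σ} {G : Finset (Finset σ)} (hU : ∀ w ∈ G, w ⊆ U)
    (h : ∀ w ∈ G, ∃ a, Priv G w a) (i : ℕ) :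
    Acyc A (Hit U G) i ↔ ¬ (i = G.card ∧ ∀ b ∈ U, ∃ w ∈ G, b ∈ w) := by
  induction hn : G.card generalizing U G i with
  | zero =>
    rw [Finset.card_eq_zero] at hn
    subst hn
    rcases U.eq_empty_or_nonempty with rfl | ⟨u, hu⟩
    · cases i with
      | zero =>
        simp only [Finset.notMem_empty, false_and, exists_false, imp_false, not_false_iff,
          implies_true, and_self, not_true, iff_false]
        intro H
        obtain ⟨x, hx⟩ := exists_ne (0 : A)
        have hs : ∀ T : Finset σ, Hit ∅ ∅ T ↔ T = ∅ := by simp [Hit]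
        obtain ⟨g, hg, hgf⟩ := H (fun T => if T = ∅ then x else 0)
          (fun T hT => by
            by_cases h : T = ∅
            · subst h; simp [hs]
            · simp [h] at hT)
          (fun T _ => by simp [bd])
        have h0 := hgf ∅ (by simp [hs])
        rw [if_pos rfl] at h0
        refine hx (h0.symm.trans (bd_eq_zero fun S _ => ?_))
        by_contra hne
        obtain ⟨h1, h2⟩ := hg S hne
        rw [hs] at h1
        subst h1
        simp at h2
      | succ i =>
        simp only [Nat.add_eq_zero_iff, one_ne_zero, and_false, false_and, not_false_iff, iff_true]
        exact acyc_of_forall_not fun T hT hc => by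
          have := Finset.subset_empty.1 hT.1
          subst this
          simp at hc
    · have h1 := acyc_cone (A := A) (G := ∅) hu (by simp) i
      simp only [h1, true_iff, not_and, not_forall]
      exact fun _ => ⟨u, hu, by simp⟩
  | succ n ih =>
    obtain ⟨w, hw⟩ : G.Nonempty := Finset.card_pos.1 (by omega)
    obtain ⟨a, ha⟩ := h w hw
    cases i with
    | zero => simpa using acyc_zero (A := A) (U := U) hw
    | succ i =>
      have hcard : (del w G).card = n := by
        rw [del, Finset.card_image_of_injOn, Finset.card_erase_of_mem hw, hn]; · rfl
        intro u hu v hv huv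
        simp only [Finset.coe_erase, Set.mem_sdiff, Finset.mem_coe, Set.mem_singleton_iff] at hu hv
        obtain ⟨c, hc⟩ := h u hu.1
        have h1 := (hc.del hw hu.2).1
        simp only at huv
        rw [huv] at h1
        exact (hc.2 v hv.1 (Finset.mem_sdiff.1 h1).1).symm
      have hmem : ∀ w' ∈ del w G, ∃ u ∈ G, u ≠ w ∧ u \ w = w' := by
        intro w' hw'
        simp only [del, Finset.mem_image, Finset.mem_erase] at hw'
        obtain ⟨u, ⟨h1, h2⟩, h3⟩ := hw'
        exact ⟨u, h2, h1, h3⟩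
      rw [acyc_step hw ha (hU w hw ha.1), ih (U := U \ w) (G := del w G) ?_ ?_ i hcard]
      · rw [not_iff_not, Nat.add_right_cancel_iff]
        refine and_congr_right fun _ => ⟨fun H b hb => ?_, fun H b hb => ?_⟩
        · by_cases hbw : b ∈ w
          · exact ⟨w, hw, hbw⟩
          · obtain ⟨w', hw', hb'⟩ := H b (Finset.mem_sdiff.2 ⟨hb, hbw⟩)
            obtain ⟨u, hu, -, rfl⟩ := hmem w' hw'
            exact ⟨u, hu, (Finset.mem_sdiff.1 hb').1⟩
        · rw [Finset.mem_sdiff] at hb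
          obtain ⟨u, hu, hbu⟩ := H b hb.1
          refine ⟨u \ w, Finset.mem_image_of_mem _ (Finset.mem_erase.2 ⟨?_, hu⟩),
            Finset.mem_sdiff.2 ⟨hbu, hb.2⟩⟩
          rintro rfl
          exact hb.2 hbu
      · intro w' hw'
        obtain ⟨u, hu, -, rfl⟩ := hmem w' hw'
        exact Finset.sdiff_subset_sdiff (hU u hu) subset_rfl
      · intro w' hw'
        obtain ⟨u, hu, hne, rfl⟩ := hmem w' hw'
        obtain ⟨c, hc⟩ := h u hu
        exact ⟨c, hc.del hw hne⟩

end Chains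

/-! ### Multigraded pieces of the Koszul complex -/

section Translation

set_option linter.unusedSectionVars false

variable {σ : Type} [Fintype σ] [LinearOrder σ] {K : Type} [Field K]

/-- The exponent vector of the square-free monomial supported on `T`. -/
noncomputable def ev (T : Finset σ) : σ →₀ ℕ :=
  Finsupp.equivFunOnFinite.symm fun a => if a ∈ T then 1 else 0

lemma ev_apply (T : Finset σ) (a : σ) : ev T a = if a ∈ T then 1 else 0 := rfl

lemma ev_support (T : Finset σ) : (ev T).support = T := by
  ext a; simp [ev_apply]

lemma degree_ev (T : Finset σ) : (ev T).degree = T.card := by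
  simp [Finsupp.degree_eq_sum, ev_apply]

lemma ev_le_iff {T : Finset σ} {α : σ →₀ ℕ} : ev T ≤ α ↔ T ⊆ α.support := by
  rw [Finsupp.le_def]
  constructor
  · intro h a ha
    have := h a
    rw [ev_apply, if_pos ha] at this
    rw [Finsupp.mem_support_iff]; omega
  · intro h a
    rw [ev_apply]
    split_ifs with ha
    · have := Finsupp.mem_support_iff.1 (h ha); omega
    · exact Nat.zero_le _

lemma ev_insert {b : σ} {T : Finset σ} (hb : b ∉ T) : ev (insert b T) = ev T + Finsupp.single b 1 := by
  ext a
  simp only [Finsupp.add_apply, ev_apply, Finset.mem_insert, Finsupp.single_apply]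
  by_cases h : a = b
  · subst h; simp [hb]
  · simp [h, Ne.symm h]

lemma sqMon_eq (S : Finset σ) : sqMon σ K S = monomial (ev S) 1 := by
  rw [MvPolynomial.monomial_eq, Finsupp.prod_fintype _ _ (by simp)]
  simp [sqMon, ev_apply, Finset.prod_ite_mem, pow_ite]

/-- The monomial `x ^ β` does not lie in the monomial ideal of `G`. -/
def Good (G : Finset (Finset σ)) (β : σ →₀ ℕ) : Prop := ∀ w ∈ G, ¬ w ⊆ β.support

lemma Good.mono {G : Finset (Finset σ)} {β γ : σ →₀ ℕ} (h : Good G β) (hγ : γ ≤ β) : Good G γ :=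
  fun w hw hs => h w hw (hs.trans (Finsupp.support_mono hγ))

lemma mem_monIdeal {G : Finset (Finset σ)} {p : MvPolynomial σ K} :
    p ∈ monIdeal σ K G ↔ ∀ β, Good G β → coeff β p = 0 := by
  have e : (fun S => sqMon σ K S) '' (G : Set (Finset σ)) =
      (fun s => monomial s (1 : K)) '' (ev '' (G : Set (Finset σ))) := by
    rw [Set.image_image]; simp [sqMon_eq]
  rw [monIdeal, e, MvPolynomial.mem_ideal_span_monomial_image]
  simp only [Set.mem_image, Finset.mem_coe, exists_exists_and_eq_and, ev_le_iff,
    MvPolynomial.mem_support_iff, Good]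
  refine forall_congr' fun β => ?_
  constructor
  · intro h h2
    by_contra h3
    obtain ⟨w, hw, hs⟩ := h h3
    exact h2 w hw hs
  · intro h h2
    by_contra h3
    push Not at h3
    exact h2 (h h3)

/-- The basis elements of multidegree `α` in the Koszul complex of `R / I`: the sets `T` for which
`x ^ α` divided by the square-free monomial on `T` is a monomial outside `I`. -/
def Basis (G : Finset (Finset σ)) (α : σ →₀ ℕ) (T : Finset σ) : Prop :=
  T ⊆ α.support ∧ Good G (α - ev T)

lemma sub_ev_insert {α : σ →₀ ℕ} {b : σ} {T : Finset σ} (hb : b ∉ T) :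
    α - ev (insert b T) = α - ev T - Finsupp.single b 1 := by
  rw [ev_insert hb, tsub_add_eq_tsub_tsub]

lemma mem_support_sub_ev {α : σ →₀ ℕ} {b : σ} {T : Finset σ} (hb : b ∉ T) :
    b ∈ (α - ev T).support ↔ b ∈ α.support := by
  simp [Finsupp.tsub_apply, ev_apply, hb]

/-- The Koszul differential on families of polynomials. -/
noncomputable def bdR (q : Finset σ → MvPolynomial σ K) (T : Finset σ) : MvPolynomial σ K :=
  ∑ b ∈ Tᶜ, sg b T • (X b * q (insert b T))

/-- The multidegree `α` component of a family of polynomials, as a chain. -/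
noncomputable def comp (G : Finset (Finset σ)) (α : σ →₀ ℕ) (q : Finset σ → MvPolynomial σ K)
    (S : Finset σ) : K :=
  if Basis G α S then coeff (α - ev S) (q S) else 0

lemma coeff_bdR {G : Finset (Finset σ)} {α : σ →₀ ℕ} (q : Finset σ → MvPolynomial σ K)
    {T : Finset σ} (hT : Basis G α T) :
    coeff (α - ev T) (bdR q T) = bd (comp G α q) T := by
  rw [bdR, bd, MvPolynomial.coeff_sum]
  refine Finset.sum_congr rfl fun b hb => ?_
  rw [Finset.mem_compl] at hb
  rw [MvPolynomial.coeff_smul, MvPolynomial.coeff_X_mul', comp, ← sub_ev_insert hb]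
  congr 1
  refine if_congr ((mem_support_sub_ev hb).trans ?_) rfl rfl
  constructor
  · intro h
    refine ⟨Finset.insert_subset h hT.1, hT.2.mono ?_⟩
    rw [sub_ev_insert hb]
    exact tsub_le_self
  · intro h
    exact h.1 (Finset.mem_insert_self b T)

lemma bdR_monomial {G : Finset (Finset σ)} {α : σ →₀ ℕ} {g : Finset σ → K}
    (hg : ∀ S, g S ≠ 0 → Basis G α S) (T : Finset σ) :
    bdR (fun S => monomial (α - ev S) (g S)) T = monomial (α - ev T) (bd g T) := by
  rw [bdR, bd, map_sum]
  refine Finset.sum_congr rfl fun b hb => ?_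
  rw [Finset.mem_compl] at hb
  rw [map_zsmul]
  congr 1
  by_cases h : g (insert b T) = 0
  · simp [h]
  · have h1 := (hg _ h).1 (Finset.mem_insert_self b T)
    rw [← mem_support_sub_ev hb, Finsupp.mem_support_iff] at h1
    rw [MvPolynomial.X, MvPolynomial.monomial_mul, one_mul, sub_ev_insert hb, add_comm,
      tsub_add_cancel_of_le]
    rw [Finsupp.single_le_iff]
    omega

lemma bdR_sum {ι : Type} (s : Finset ι) (q : ι → Finset σ → MvPolynomial σ K) (T : Finset σ) :
    bdR (fun S => ∑ α ∈ s, q α S) T = ∑ α ∈ s, bdR (q α) T := by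
  simp only [bdR]
  rw [Finset.sum_comm]
  refine Finset.sum_congr rfl fun b _ => ?_
  rw [Finset.mul_sum, Finset.smul_sum]

lemma monomial_mem_of_not_good {G : Finset (Finset σ)} {β : σ →₀ ℕ} (h : ¬ Good G β) (x : K) :
    monomial β x ∈ monIdeal σ K G := by
  rw [mem_monIdeal]
  intro γ hγ
  rw [MvPolynomial.coeff_monomial, if_neg]
  rintro rfl
  exact h hγ

/-- A Koszul chain, extended by zero to all finite sets. -/
noncomputable def ext {I : Ideal (MvPolynomial σ K)} {i : ℕ}
    (c : KT σ i →₀ (MvPolynomial σ K ⧸ I)) (T : Finset σ) : MvPolynomial σ K ⧸ I :=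
  if h : T.card = i then c ⟨T, h⟩ else 0

lemma kd_apply {I : Ideal (MvPolynomial σ K)} {i : ℕ} (c : KT σ i →₀ (MvPolynomial σ K ⧸ I))
    (T : KT σ (i - 1)) :
    kd σ K I i c T = ∑ b ∈ T.1ᶜ, sg b T.1 • ((X b : MvPolynomial σ K) • ext c (insert b T.1)) := by
  obtain ⟨T, hT⟩ := T
  have h1 : kd σ K I i c ⟨T, hT⟩ = ∑ S : KT σ i, ∑ b : σ,
      if b ∈ S.1 ∧ S.1.erase b = T then sg b T • ((X b : MvPolynomial σ K) • c S) else 0 := by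
    rw [kd, Finsupp.sum_fintype _ _ (by simp), Finsupp.finsetSum_apply]
    refine Finset.sum_congr rfl fun S _ => ?_
    rw [Finsupp.finsetSum_apply]
    simp only [Finsupp.smul_apply, Finsupp.single_apply, Subtype.mk.injEq]
    rw [Finset.sum_attach S.1 (fun b => ((-1 : ℤ) ^ ((S.1.filter (fun x => x < b)).card)) •
      (if S.1.erase b = T then (X b : MvPolynomial σ K) • c S else 0)),
      ← Finset.sum_filter_add_sum_filter_not Finset.univ (· ∈ S.1)]
    rw [Finset.sum_eq_zero (s := Finset.univ.filter fun x => ¬ x ∈ S.1), add_zero]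
    · refine Finset.sum_congr (by simp) fun b hb => ?_
      replace hb : b ∈ S.1 := by simpa using hb
      by_cases hE : S.1.erase b = T
      · subst hE
        rw [if_pos rfl, if_pos ⟨hb, rfl⟩, sg, Finset.filter_erase, Finset.erase_eq_of_notMem]
        simp
      · rw [if_neg hE, if_neg (fun h => hE h.2), smul_zero]
    · intro b hb
      rw [if_neg]
      simp only [Finset.mem_filter] at hb
      exact fun h => hb.2 h.1
  rw [h1, Finset.sum_comm, ← Finset.sum_filter_add_sum_filter_not Finset.univ (· ∈ Tᶜ)]
  rw [Finset.sum_eq_zero (s := Finset.univ.filter fun x => ¬ x ∈ Tᶜ), add_zero]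
  · refine Finset.sum_congr (by ext; simp) fun b hb => ?_
    replace hb : b ∈ Tᶜ := by simpa using hb
    have hb' := Finset.mem_compl.1 hb
    by_cases hc : (insert b T).card = i
    · rw [Finset.sum_eq_single ⟨insert b T, hc⟩]
      · simp [ext, hc, Finset.erase_insert hb']
      · intro S _ hS
        rw [if_neg]
        rintro ⟨h2, rfl⟩
        exact hS (Subtype.ext (Finset.insert_erase h2).symm)
      · simp
    · rw [ext, dif_neg hc, smul_zero, smul_zero]
      refine Finset.sum_eq_zero fun S _ => ?_
      rw [if_neg]
      rintro ⟨h2, rfl⟩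
      rw [Finset.insert_erase h2] at hc
      exact hc S.2
  · intro b hb
    refine Finset.sum_eq_zero fun S _ => ?_
    rw [if_neg]
    rintro ⟨h2, rfl⟩
    simp at hb

lemma kd_apply_mk {I : Ideal (MvPolynomial σ K)} {i : ℕ} {c : KT σ i →₀ (MvPolynomial σ K ⧸ I)}
    {q : Finset σ → MvPolynomial σ K} (hq : ∀ S, Ideal.Quotient.mk I (q S) = ext c S)
    (T : KT σ (i - 1)) : kd σ K I i c T = Ideal.Quotient.mk I (bdR q T.1) := by
  rw [kd_apply, bdR, map_sum]
  refine Finset.sum_congr rfl fun b _ => ?_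
  rw [map_zsmul, ← hq]
  rfl

lemma exists_lift {I : Ideal (MvPolynomial σ K)} {i : ℕ} (c : KT σ i →₀ (MvPolynomial σ K ⧸ I)) :
    ∃ q : Finset σ → MvPolynomial σ K, (∀ S, Ideal.Quotient.mk I (q S) = ext c S) ∧
      ∀ S, S.card ≠ i → q S = 0 := by
  choose q hq using fun S => Ideal.Quotient.mk_surjective (I := I) (ext c S)
  refine ⟨fun S => if S.card = i then q S else 0, fun S => ?_, fun S hS => by simp [hS]⟩
  by_cases h : S.card = i
  · simp [h, hq]
  · simp [h, ext]

/-- A family of polynomials indexed by sets of size `i` as a Koszul chain. -/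
noncomputable def toChain (I : Ideal (MvPolynomial σ K)) (i : ℕ)
    (q : Finset σ → MvPolynomial σ K) : KT σ i →₀ (MvPolynomial σ K ⧸ I) :=
  Finsupp.equivFunOnFinite.symm fun T => Ideal.Quotient.mk I (q T.1)

lemma ext_toChain {I : Ideal (MvPolynomial σ K)} {i : ℕ} {q : Finset σ → MvPolynomial σ K}
    (hq : ∀ S, S.card ≠ i → q S = 0) (S : Finset σ) :
    Ideal.Quotient.mk I (q S) = ext (toChain I i q) S := by
  by_cases h : S.card = i
  · simp [ext, h, toChain]
  · simp [ext, h, hq]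

lemma bd_eq_zero_of_card {A : Type} [AddCommGroup A] {i : ℕ} {f : Finset σ → A} {T : Finset σ}
    (hf : ∀ S, S.card ≠ i → f S = 0) (hT : T.card + 1 ≠ i) : bd f T = 0 :=
  Finset.sum_eq_zero fun b hb => by
    rw [hf, smul_zero]
    rwa [Finset.card_insert_of_notMem (Finset.mem_compl.1 hb)]

/-- Nonzero homology in multidegree `α` gives a nonzero graded Betti number. -/
lemma bettiNe_of_not_acyc {G : Finset (Finset σ)} {α : σ →₀ ℕ} {i : ℕ}
    (h : ¬ Acyc K (Basis G α) i) : BettiNe σ K (monIdeal σ K G) i α.degree := by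
  simp only [Acyc, not_forall, not_exists, not_and] at h
  obtain ⟨f, hf, hc, hn⟩ := h
  have hf0 : ∀ S, S.card ≠ i → f S = 0 := fun S hS => by
    by_contra h; exact hS (hf S h).2
  have hq0 : ∀ S, S.card ≠ i → monomial (α - ev S) (f S) = 0 := fun S hS => by simp [hf0 S hS]
  refine ⟨toChain _ i fun S => monomial (α - ev S) (f S), ?_, ?_, ?_⟩
  · intro T
    refine ⟨monomial (α - ev T.1) (f T.1), ?_, rfl⟩
    by_cases h0 : f T.1 = 0
    · rw [h0, map_zero]; exact MvPolynomial.isHomogeneous_zero _ _ _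
    · refine MvPolynomial.isHomogeneous_monomial _ ?_
      have h1 := congrArg Finsupp.degree
        (tsub_add_cancel_of_le (ev_le_iff.2 (hf _ h0).1.1))
      rw [map_add, degree_ev, (hf _ h0).2] at h1
      omega
  · ext1 T
    rw [kd_apply_mk (ext_toChain hq0), bdR_monomial (fun S hS => (hf S hS).1), Finsupp.zero_apply,
      Ideal.Quotient.eq_zero_iff_mem]
    by_cases hT : Basis G α T.1
    · rw [hc _ hT, map_zero]; exact Ideal.zero_mem _
    · by_cases hs : T.1 ⊆ α.support
      · exact monomial_mem_of_not_good (fun h => hT ⟨hs, h⟩) _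
      · rw [bd_eq_zero, map_zero]
        · exact Ideal.zero_mem _
        · intro S hS
          by_contra h; exact hs (hS.trans (hf S h).1.1)
  · intro b hb
    obtain ⟨q, hq, hq1⟩ := exists_lift b
    have hg : ChainOn (Basis G α) (i + 1) (comp G α q) := by
      intro S hS
      rw [comp] at hS
      by_cases h1 : Basis G α S
      · refine ⟨h1, ?_⟩
        by_contra h2
        simp [hq1 S h2] at hS
      · simp [h1] at hS
    obtain ⟨T, hT, hne⟩ := hn (comp G α q) hg
    refine hne ?_
    by_cases hcard : T.card = i
    · have h1 := kd_apply_mk hq ⟨T, hcard⟩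
      rw [hb] at h1
      have h2 : Ideal.Quotient.mk (monIdeal σ K G) (monomial (α - ev T) (f T)) =
        Ideal.Quotient.mk (monIdeal σ K G) (bdR q T) := h1
      rw [Ideal.Quotient.eq, mem_monIdeal] at h2
      have h3 := h2 _ hT.2
      rw [MvPolynomial.coeff_sub, coeff_bdR q hT, MvPolynomial.coeff_monomial, if_pos rfl,
        sub_eq_zero] at h3
      exact h3.symm
    · rw [hf0 T hcard]
      exact bd_eq_zero_of_card (i := i + 1) (fun S hS => by simp [comp, hq1 S hS]) (by omega)

/-- A graded Betti number vanishes as soon as the homology in all multidegrees of that total degree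
does. -/
lemma not_bettiNe_of_acyc {G : Finset (Finset σ)} {i j : ℕ} (hij : i ≤ j)
    (h : ∀ α : σ →₀ ℕ, α.degree = j → Acyc K (Basis G α) i) :
    ¬ BettiNe σ K (monIdeal σ K G) i j := by
  rintro ⟨c, hhom, hc, hn⟩
  choose p hp hpc using hhom
  set q : Finset σ → MvPolynomial σ K := fun S => if h : S.card = i then p ⟨S, h⟩ else 0 with hqdef
  have hq : ∀ S, Ideal.Quotient.mk (monIdeal σ K G) (q S) = ext c S := by
    intro S
    by_cases h : S.card = i <;> simp [hqdef, ext, h, hpc]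
  have hq0 : ∀ S, S.card ≠ i → q S = 0 := fun S hS => by simp [hqdef, hS]
  have key : ∀ α : σ →₀ ℕ, ∃ g : Finset σ → K, ChainOn (Basis G α) (i + 1) g ∧
      (α.degree = j → ∀ T, Basis G α T → bd g T = comp G α q T) := by
    intro α
    by_cases hα : α.degree = j
    · obtain ⟨g, h1, h2⟩ := h α hα (comp G α q) (fun S hS => by
        rw [comp] at hS
        by_cases h1 : Basis G α S
        · refine ⟨h1, ?_⟩
          by_contra h2
          simp [hq0 S h2] at hS
        · simp [h1] at hS) (fun T hT => by
        by_cases hcard : T.card + 1 = i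
        · have h1 := kd_apply_mk hq ⟨T, by omega⟩
          rw [hc, Finsupp.zero_apply, eq_comm, Ideal.Quotient.eq_zero_iff_mem, mem_monIdeal] at h1
          rw [← coeff_bdR q hT]
          exact h1 _ hT.2
        · refine bd_eq_zero_of_card (i := i) (fun S hS => ?_) hcard
          simp [comp, hq0 S hS])
      exact ⟨g, h1, fun _ => h2⟩
    · exact ⟨fun _ => 0, fun T hT => (hT rfl).elim, fun h => (hα h).elim⟩
  choose g hg hgd using key
  set s : Finset (σ →₀ ℕ) := Finset.finsuppAntidiag Finset.univ j with hs
  have hmem : ∀ α : σ →₀ ℕ, α ∈ s ↔ α.degree = j := by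
    intro α
    simp [hs, Finset.mem_finsuppAntidiag, Finsupp.degree_eq_sum]
  set Q : Finset σ → MvPolynomial σ K := fun S => ∑ α ∈ s, monomial (α - ev S) (g α S) with hQ
  have hQ0 : ∀ S, S.card ≠ i + 1 → Q S = 0 := by
    intro S hS
    refine Finset.sum_eq_zero fun α _ => ?_
    have : g α S = 0 := by by_contra h; exact hS (hg α S h).2
    rw [this, map_zero]
  refine hn (toChain _ (i + 1) Q) ?_
  ext1 T
  have hT : T.1.card = i := T.2
  have e : c T = Ideal.Quotient.mk (monIdeal σ K G) (q T.1) := by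
    rw [hq, ext, dif_pos hT]; rfl
  rw [kd_apply_mk (ext_toChain hQ0), e, Ideal.Quotient.eq, mem_monIdeal, hQ, bdR_sum]
  intro β hβ
  rw [Finset.sum_congr rfl fun α _ => bdR_monomial (fun S hS => (hg α S hS).1) T.1,
    MvPolynomial.coeff_sub, MvPolynomial.coeff_sum, sub_eq_zero]
  -- only `α = β + ev T` contributes to the coefficient at `β`
  have hsub : β + ev T.1 - ev T.1 = β := add_tsub_cancel_right _ _
  have hB : Basis G (β + ev T.1) T.1 :=
    ⟨ev_le_iff.1 le_add_self, by rwa [hsub]⟩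
  have hother : ∀ α : σ →₀ ℕ, α ≠ β + ev T.1 →
      coeff β (monomial (α - ev T.1) (bd (g α) T.1)) = 0 := by
    intro α hne
    by_cases hα : T.1 ⊆ α.support
    · rw [MvPolynomial.coeff_monomial, if_neg]
      rintro rfl
      exact hne (tsub_add_cancel_of_le (ev_le_iff.2 hα)).symm
    · rw [bd_eq_zero, map_zero, MvPolynomial.coeff_zero]
      intro S hS
      by_contra h; exact hα (hS.trans (hg α S h).1.1)
  by_cases hd : (β + ev T.1).degree = j
  · rw [Finset.sum_eq_single (β + ev T.1) (fun α _ => hother α)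
      (fun h => (h ((hmem _).2 hd)).elim), hsub, MvPolynomial.coeff_monomial, if_pos rfl,
      hgd _ hd _ hB, comp, if_pos hB, hsub]
  · rw [Finset.sum_eq_zero fun α hα => hother α fun e => hd (e ▸ (hmem α).1 hα)]
    rw [map_add, degree_ev, hT] at hd
    have e2 : q T.1 = p T := by simp only [hqdef, hT, dif_pos]; rfl
    rw [e2, (hp T).coeff_eq_zero]
    omega

end Translation

/-! ### Combinatorics of the labeled hypergraph -/

section Combinatorics

set_option linter.unusedSectionVars false

variable {σ : Type} [Fintype σ] [LinearOrder σ] {K : Type} [Field K]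

lemma basis_iff {G : Finset (Finset σ)} {α : σ →₀ ℕ} {T : Finset σ} :
    Basis G α T ↔
      Hit α.support ((G.filter (· ⊆ α.support)).image (·.filter (α · = 1))) T := by
  simp only [Basis, Hit, Good]
  refine and_congr_right fun hT => ?_
  constructor
  · intro h w' hw'
    simp only [Finset.mem_image, Finset.mem_filter] at hw'
    obtain ⟨w, ⟨hw, hs⟩, rfl⟩ := hw'
    obtain ⟨a, haw, ha⟩ := Finset.not_subset.1 (h w hw)
    have h0 := Finsupp.mem_support_iff.1 (hs haw)
    rw [Finsupp.mem_support_iff, not_not, Finsupp.tsub_apply, ev_apply] at ha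
    split_ifs at ha with haT
    · exact ⟨a, haT, Finset.mem_filter.2 ⟨haw, by omega⟩⟩
    · omega
  · intro h w hw hs
    have hs' : w ⊆ α.support := hs.trans (Finsupp.support_mono tsub_le_self)
    obtain ⟨b, hb, hbw⟩ := h _ (Finset.mem_image_of_mem _ (Finset.mem_filter.2 ⟨hw, hs'⟩))
    rw [Finset.mem_filter] at hbw
    have := Finsupp.mem_support_iff.1 (hs hbw.1)
    rw [Finsupp.tsub_apply, ev_apply, if_pos hb, hbw.2] at this
    exact this rfl

/-- Homology lives only in square-free multidegrees. -/
lemma acyc_basis_of_not_sqfree {G : Finset (Finset σ)} {α : σ →₀ ℕ} {a : σ} (ha : 2 ≤ α a)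
    (i : ℕ) : Acyc K (Basis G α) i := by
  have e : Basis G α =
      Hit α.support ((G.filter (· ⊆ α.support)).image (·.filter (α · = 1))) := by
    funext T; exact propext basis_iff
  rw [e]
  refine acyc_cone (a := a) (Finsupp.mem_support_iff.2 (by omega)) (fun w hw haw => ?_) i
  simp only [Finset.mem_image, Finset.mem_filter] at hw
  obtain ⟨u, -, rfl⟩ := hw
  have := (Finset.mem_filter.1 haw).2
  omega

lemma basis_ev (G : Finset (Finset σ)) (U : Finset σ) :
    Basis G (ev U) = Hit U (G.filter (· ⊆ U)) := by
  funext T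
  rw [basis_iff, ev_support]
  congr 1
  ext w
  simp only [Finset.mem_image, Finset.mem_filter]
  have e : ∀ u : Finset σ, u ⊆ U → u.filter (fun a => ev U a = 1) = u := by
    intro u hu
    refine Finset.filter_true_of_mem fun a ha => ?_
    rw [ev_apply, if_pos (hu ha)]
  constructor
  · rintro ⟨u, ⟨h1, h2⟩, rfl⟩
    rw [e u h2]
    exact ⟨h1, h2⟩
  · rintro ⟨h1, h2⟩
    exact ⟨w, ⟨h1, h2⟩, e w h2⟩

lemma exists_ev {α : σ →₀ ℕ} (h : ∀ a, α a < 2) : α = ev α.support := by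
  ext a
  rw [ev_apply]
  have := h a
  split_ifs with h1
  · have := Finsupp.mem_support_iff.1 h1; omega
  · exact Finsupp.notMem_support_iff.1 h1

lemma edgeOf_eq_singleton {G : Finset (Finset σ)} {v : Finset σ} (hv : v ∈ G) {a : σ} :
    EdgeOf σ G a = {v} ↔ Priv G v a := by
  constructor
  · intro h
    have h' : ∀ w, w ∈ G ∧ a ∈ w ↔ w = v := fun w => by
      rw [← Finset.mem_singleton, ← h, EdgeOf, Finset.mem_filter]
    exact ⟨((h' v).2 rfl).2, fun w hw haw => (h' w).1 ⟨hw, haw⟩⟩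
  · rintro ⟨h1, h2⟩
    ext w
    rw [EdgeOf, Finset.mem_filter, Finset.mem_singleton]
    exact ⟨fun h => h2 w h.1 h.2, fun h => h ▸ ⟨hv, h1⟩⟩

lemma closed_iff {G : Finset (Finset σ)} {v : Finset σ} (hv : v ∈ G) :
    Closed σ G v ↔ ∃ a, Priv G v a :=
  exists_congr fun _ => edgeOf_eq_singleton hv

lemma mem_neighbors {G : Finset (Finset σ)} {v w : Finset σ} :
    w ∈ Neighbors σ G v ↔ w ∈ G ∧ w ≠ v ∧ v ∈ G ∧ ∃ a ∈ v, a ∈ w := by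
  simp only [Neighbors, EdgeOf, Finset.mem_filter]
  constructor
  · rintro ⟨h1, h2, a, ⟨h3, h4⟩, h5, h6⟩
    exact ⟨h1, h2, h3, a, h4, h6⟩
  · rintro ⟨h1, h2, h3, a, h4, h6⟩
    exact ⟨h1, h2, a, ⟨h3, h4⟩, h1, h6⟩

lemma mem_varsOf {G : Finset (Finset σ)} {a : σ} : a ∈ varsOf σ G ↔ ∃ w ∈ G, a ∈ w := by
  simp [varsOf]

/-- When open vertices are isolated, square-free multidegrees only contribute homology with
`|U| - i ≤ |X| - |V|`. -/
lemma acyc_of_isolated [Nonempty σ] {G : Finset (Finset σ)}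
    (h4 : ∀ v ∈ G, ¬ Closed σ G v → ∀ w ∈ Neighbors σ G v, Closed σ G w) {U : Finset σ} {i : ℕ}
    (hi : ((varsOf σ G).card : ℤ) - G.card < (U.card : ℤ) - i) :
    Acyc K (Hit U (G.filter (· ⊆ U))) i := by
  set G' := G.filter (· ⊆ U) with hG'
  have hmem : ∀ {w}, w ∈ G' ↔ w ∈ G ∧ w ⊆ U := by simp [hG']
  have hopen : ∀ v ∈ G, ¬ Closed σ G v → ∀ w ∈ G, w ≠ v → ∀ b ∈ v, b ∈ w → Closed σ G w :=
    fun v hv hvo w hw hne b hbv hbw => h4 v hv hvo w (mem_neighbors.2 ⟨hw, hne, hv, b, hbv, hbw⟩)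
  have hpriv : ∀ {w a}, Priv G w a → Priv G' w a :=
    fun h => ⟨h.1, fun w' hw' => h.2 w' (hmem.1 hw').1⟩
  by_cases hcov : ∃ v ∈ G', ¬ Closed σ G v ∧ ∀ b ∈ v, ∃ w ∈ G', w ≠ v ∧ b ∈ w
  · obtain ⟨v, hv, hvo, hb⟩ := hcov
    refine acyc_covered hv (fun w hw => (hmem.1 hw).2) (fun b hbv => ?_) i
    obtain ⟨w, hw, hne, hbw⟩ := hb b hbv
    obtain ⟨a, ha⟩ := (closed_iff (hmem.1 hw).1).1
      (hopen v (hmem.1 hv).1 hvo w (hmem.1 hw).1 hne b hbv hbw)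
    exact ⟨w, hw, hne, hbw, a, hpriv ha⟩
  push Not at hcov
  have hsat : ∀ w ∈ G', ∃ a, Priv G' w a := by
    intro w hw
    by_cases hc : Closed σ G w
    · obtain ⟨a, ha⟩ := (closed_iff (hmem.1 hw).1).1 hc
      exact ⟨a, hpriv ha⟩
    · obtain ⟨b, hb, h⟩ := hcov w hw hc
      exact ⟨b, hb, fun w' hw' hbw' => by by_contra hne; exact h w' hw' hne hbw'⟩
  rw [acyc_saturated (fun w hw => (hmem.1 hw).2) hsat]
  rintro ⟨hic, hU⟩
  have hUX : U ⊆ varsOf σ G := fun b hb => by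
    obtain ⟨w, hw, hbw⟩ := hU b hb
    exact mem_varsOf.2 ⟨w, (hmem.1 hw).1, hbw⟩
  -- each generator not dividing `x ^ U` is charged to a variable outside `U`: a private one if it
  -- is closed, any one if it is open
  have hch : ∀ w ∈ G \ G', ∃ a ∈ varsOf σ G \ U, a ∈ w ∧ (Closed σ G w → Priv G w a) := by
    intro w hw
    obtain ⟨hwG, hwG'⟩ := Finset.mem_sdiff.1 hw
    by_cases hc : Closed σ G w
    · obtain ⟨a, ha⟩ := (closed_iff hwG).1 hc
      refine ⟨a, Finset.mem_sdiff.2 ⟨mem_varsOf.2 ⟨w, hwG, ha.1⟩, fun haU => ?_⟩, ha.1, fun _ => ha⟩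
      obtain ⟨w', hw', h⟩ := hU a haU
      exact hwG' (ha.2 w' (hmem.1 hw').1 h ▸ hw')
    · obtain ⟨a, haw, ha⟩ := Finset.not_subset.1 (fun h => hwG' (hmem.2 ⟨hwG, h⟩))
      exact ⟨a, Finset.mem_sdiff.2 ⟨mem_varsOf.2 ⟨w, hwG, haw⟩, ha⟩, haw, fun h => (hc h).elim⟩
  choose! φ hφ1 hφ2 hφ3 using hch
  have hle : (G \ G').card ≤ (varsOf σ G \ U).card := by
    refine Finset.card_le_card_of_injOn φ hφ1 ?_
    intro w hw w' hw' he
    have hwG := (Finset.mem_sdiff.1 hw).1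
    have hwG' := (Finset.mem_sdiff.1 hw').1
    by_contra hne
    by_cases hc : Closed σ G w
    · exact hne ((hφ3 w hw hc).2 w' hwG' (he ▸ hφ2 w' hw')).symm
    · have hc' := hopen w hwG hc w' hwG' (Ne.symm hne) (φ w) (hφ2 w hw) (he ▸ hφ2 w' hw')
      exact hne ((hφ3 w' hw' hc').2 w hwG (he ▸ hφ2 w hw))
  have e1 := Finset.card_sdiff_add_card_eq_card (Finset.filter_subset (· ⊆ U) G)
  have e2 := Finset.card_sdiff_add_card_eq_card hUX
  rw [← hG'] at e1
  omega

end Combinatorics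

end SqfreeHyp

open SqfreeHyp

/-- Corollary `Tmatch`: suppose `dim H(I) = 1`, there are
closed vertices `c_1,…,c_t` (the members of `C`) such that (1) no two of them
are neighbors, (2) every open vertex has some `c_i` as a neighbor, (3) each
`c_i` has a unique label on its singleton edge, and (4) all open vertices are
isolated.  Then `reg(R/I) = |X| − |V|`. -/
theorem stmt_16 (σ : Type) [Fintype σ] [LinearOrder σ] (K : Type) [Field K]
    (G : Finset (Finset σ)) (hmin : MinGens σ G) (hne : ∀ S ∈ G, S.Nonempty)
    (hdim : ∀ a : σ, (EdgeOf σ G a).card ≤ 2)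
    (hdim1 : ∃ a : σ, (EdgeOf σ G a).card = 2)
    (C : Finset (Finset σ)) (hCG : C ⊆ G) (hCc : ∀ c ∈ C, Closed σ G c)
    (h1 : ∀ c ∈ C, ∀ c' ∈ C, c' ∉ Neighbors σ G c)
    (h2 : ∀ v ∈ G, ¬ Closed σ G v → ∃ c ∈ C, c ∈ Neighbors σ G v)
    (h3 : ∀ c ∈ C, ∃! a : σ, EdgeOf σ G a = {c})
    (h4 : ∀ v ∈ G, ¬ Closed σ G v → ∀ w ∈ Neighbors σ G v, Closed σ G w) :
    reg σ K (monIdeal σ K G) = ((varsOf σ G).card : ℤ) - (G.card : ℤ) := by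
  have : Nonempty σ := ⟨hdim1.choose⟩
  have hlabel : ∀ c ∈ C, ∃ a : σ, Priv G c a ∧ ∀ b, Priv G c b → b = a := by
    intro c hc
    obtain ⟨a, ha, hu⟩ := h3 c hc
    simp only [edgeOf_eq_singleton (hCG hc)] at ha hu
    exact ⟨a, ha, hu⟩
  choose! ℓ hℓ hℓu using hlabel
  -- `Y` consists of the variables other than the private labels of the members of `C`
  set Y : Finset σ := varsOf σ G \ C.image ℓ with hY
  have hℓY : ∀ c ∈ C, ℓ c ∉ Y := fun c hc h =>
    (Finset.mem_sdiff.1 h).2 (Finset.mem_image_of_mem _ hc)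
  have hYcard : Y.card + C.card = (varsOf σ G).card := by
    rw [← Finset.card_image_of_injOn (f := ℓ) (s := C)]
    · refine Finset.card_sdiff_add_card_eq_card fun a ha => ?_
      obtain ⟨c, hc, rfl⟩ := Finset.mem_image.1 ha
      exact mem_varsOf.2 ⟨c, hCG hc, (hℓ c hc).1⟩
    · intro c hc c' hc' he
      exact (hℓ c' hc').2 c (hCG hc) (he ▸ (hℓ c hc).1)
  have hGY : G.filter (· ⊆ Y) = G \ C := by
    ext w
    simp only [Finset.mem_filter, Finset.mem_sdiff]
    refine and_congr_right fun hw => ⟨fun h hc => hℓY w hc (h (hℓ w hc).1), fun hc a ha => ?_⟩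
    refine Finset.mem_sdiff.2 ⟨mem_varsOf.2 ⟨w, hw, ha⟩, fun h => ?_⟩
    obtain ⟨c, hcC, rfl⟩ := Finset.mem_image.1 h
    exact hc ((hℓ c hcC).2 w hw ha ▸ hcC)
  have hGcard : (G \ C).card + C.card = G.card := Finset.card_sdiff_add_card_eq_card hCG
  have hsat : ∀ w ∈ G \ C, ∃ a, Priv (G \ C) w a := by
    intro w hw
    obtain ⟨hwG, hwC⟩ := Finset.mem_sdiff.1 hw
    by_cases hc : Closed σ G w
    · obtain ⟨a, ha⟩ := (closed_iff hwG).1 hc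
      exact ⟨a, ha.1, fun w' hw' => ha.2 w' (Finset.mem_sdiff.1 hw').1⟩
    · -- a variable shared by the open vertex `w` and some `c ∈ C` lies in no third generator
      obtain ⟨c, hcC, hcw⟩ := h2 w hwG hc
      obtain ⟨hcG, hcw, -, a, haw, hac⟩ := mem_neighbors.1 hcw
      refine ⟨a, haw, fun w' hw' haw' => ?_⟩
      obtain ⟨hwG', hwC'⟩ := Finset.mem_sdiff.1 hw'
      by_contra hne'
      have hsub : ({w, c, w'} : Finset (Finset σ)) ⊆ EdgeOf σ G a := by
        intro u hu
        simp only [Finset.mem_insert, Finset.mem_singleton] at hu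
        rw [EdgeOf, Finset.mem_filter]
        rcases hu with rfl | rfl | rfl
        exacts [⟨hwG, haw⟩, ⟨hcG, hac⟩, ⟨hwG', haw'⟩]
      have h5 := (Finset.card_le_card hsub).trans (hdim a)
      rw [Finset.card_eq_three.2 ⟨w, c, w', hcw.symm, Ne.symm hne',
        fun e => hwC' (e ▸ hcC), rfl⟩] at h5
      omega
  have hcov : ∀ b ∈ Y, ∃ w ∈ G \ C, b ∈ w := by
    intro b hb
    obtain ⟨hbX, hbℓ⟩ := Finset.mem_sdiff.1 hb
    obtain ⟨w, hw, hbw⟩ := mem_varsOf.1 hbX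
    by_cases hwC : w ∈ C
    · -- otherwise `b` would be a second private label of `w`
      by_contra hno
      push Not at hno
      refine hbℓ (Finset.mem_image.2 ⟨w, hwC, (hℓu w hwC b ⟨hbw, fun w' hw' hbw' => ?_⟩).symm⟩)
      by_contra hne'
      by_cases hwC' : w' ∈ C
      · exact h1 w hwC w' hwC' (mem_neighbors.2 ⟨hw', hne', hw, b, hbw, hbw'⟩)
      · exact hno w' (Finset.mem_sdiff.2 ⟨hw', hwC'⟩) hbw'
    · exact ⟨w, Finset.mem_sdiff.2 ⟨hw, hwC⟩, hbw⟩
  have hle : (G \ C).card ≤ Y.card := by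
    choose! φ hφ using hsat
    refine Finset.card_le_card_of_injOn φ (fun w hw => ?_) (fun w hw w' hw' he => ?_)
    · have hw' : w ∈ G.filter (· ⊆ Y) := hGY ▸ hw
      exact (Finset.mem_filter.1 hw').2 (hφ w hw).1
    · exact (hφ w' hw').2 w hw (he ▸ (hφ w hw).1)
  have hB : BettiNe σ K (monIdeal σ K G) (G \ C).card Y.card := by
    rw [← degree_ev Y]
    refine bettiNe_of_not_acyc ?_
    rw [basis_ev, hGY, acyc_saturated (fun w hw => ?_) hsat]
    · exact fun h => h ⟨rfl, hcov⟩
    · have hw' : w ∈ G.filter (· ⊆ Y) := hGY ▸ hw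
      exact (Finset.mem_filter.1 hw').2
  refine IsGreatest.csSup_eq ⟨⟨_, _, hB, by omega⟩, ?_⟩
  rintro d ⟨i, j, hbetti, rfl⟩
  by_contra hlt
  refine not_bettiNe_of_acyc (by omega) (fun α hα => ?_) hbetti
  by_cases hsq : ∀ a, α a < 2
  · rw [exists_ev hsq, basis_ev]
    refine acyc_of_isolated h4 ?_
    have hU : α.support.card = j := by rw [← hα, ← degree_ev, ← exists_ev hsq]
    rw [hU]
    omega
  · push Not at hsq
    obtain ⟨a, ha⟩ := hsq
    exact acyc_basis_of_not_sqfree ha i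
end
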